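/- (L∞ estimate on valleys) Fix p ∈ (d, ∞). Let φ^ε be the normalized minimizer of I as above, with λ_{ε,i} = |V_i|^{-1}∫_{V_i} φ^ε dξ and λ_ε = λ_{ε,1} = −λ_{ε,2} ≥ 0, additionally normalized so that sup_{ℝ^d} |φ^ε| = max(sup_{V_1}|φ^ε|, sup_{V_2}|φ^ε|). Then for every 1 ≤ i ≤ K, ‖φ^ε − λ_{ε,i}‖_{L^∞(V_i)} ≤ o_ε(1) · (1 + λ_ε^{1 − 1/p}) as ε → 0. -/

import Mathlib

open MeasureTheory Real Filter Topology Set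

noncomputable section

/-- Euclidean space `ℝ^d`. -/
abbrev Euc (d : ℕ) := EuclideanSpace ℝ (Fin d)

/-- The Hessian matrix of `Φ` at `ξ`. -/
def hessian {d : ℕ} (Φ : Euc d → ℝ) (ξ : Euc d) : Matrix (Fin d) (Fin d) ℝ :=
  fun i j => iteratedFDeriv ℝ 2 Φ ξ ![EuclideanSpace.single i 1, EuclideanSpace.single j 1]

/-- The divergence of a vector field on `ℝ^d`. -/
def diverg {d : ℕ} (F : Euc d → Euc d) (ξ : Euc d) : ℝ :=
  ∑ j, fderiv ℝ (fun ζ => F ζ j) ξ (EuclideanSpace.single j 1)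

/-- The Laplacian of a function on `ℝ^d`. -/
def lapl {d : ℕ} (f : Euc d → ℝ) (x : Euc d) : ℝ :=
  ∑ j, iteratedFDeriv ℝ 2 f x ![EuclideanSpace.single j 1, EuclideanSpace.single j 1]

/-- The time scale `τ_ε = ε⁻¹ e^{-(H-h)/ε}`. -/
def tau (H h ε : ℝ) : ℝ := ε⁻¹ * Real.exp (-(H - h) / ε)

/-- The partition function `Z_ε = ∫ e^{-Φ/ε}`. -/
def Zpart {d : ℕ} (Φ : Euc d → ℝ) (ε : ℝ) : ℝ := ∫ ξ : Euc d, Real.exp (-Φ ξ / ε)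

/-- The Gibbs density `σ^ε = Z_ε⁻¹ e^{-Φ/ε}`. -/
def sigma {d : ℕ} (Φ : Euc d → ℝ) (ε : ℝ) (ξ : Euc d) : ℝ :=
  (Zpart Φ ε)⁻¹ * Real.exp (-Φ ξ / ε)

/-
Testing the minimality of `φ` against `e^{Φ/ε} ψ` shows that the generator of the Langevin dynamics
applied to `φ` is `O(1/ε)` in the weak sense, while testing it against `φ` itself shows that the
Dirichlet energy with weight `e^{-Φ/ε}` is `O(ε⁻¹ e^{-H/ε})` times the gap between the two averages.
Mollify `φ` at radius `r`. The weak equation bounds the error by `O(r/ε)(1 + sup |φ|)`, and the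
energy bounds the gradient of the mollification, with the loss `e^{a/(2ε)}` on `{Φ ≤ a}`. Choosing
`r` exponentially small bounds the oscillation of `φ` on a compact subset of a well by
`e^{-κ/ε}` times the size of `φ`, the sum of one, the gap and the supremum; choosing `r` a small
multiple of `ε` bounds the oscillation over the connected set of all valleys by a small multiple of
the size plus a subexponential term. As the gap and the supremum are themselves controlled by the
latter oscillation, the size is subexponential, and the oscillation on each valley is exponentially
small.
-/

section GradientControl

variable {E : Type*} [NormedAddCommGroup E] [NormedSpace ℝ E]

/-- `GradientControlled U C` expresses that the oscillation on `C` of every differentiable function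
is at most a constant times a bound for its derivative on a fixed compact part of `U`. -/
def GradientControlled (U C : Set E) : Prop :=
  ∃ L : ℝ, 0 ≤ L ∧ ∃ K ⊆ U, IsCompact K ∧ ∀ F : E → ℝ, Differentiable ℝ F → ∀ g : ℝ, 0 ≤ g →
    (∀ z ∈ K, ‖fderiv ℝ F z‖ ≤ g) → ∀ x ∈ C, ∀ y ∈ C, |F x - F y| ≤ L * g

namespace GradientControlled

variable {U s C D : Set E} {x y z : E}

lemma mono (hD : GradientControlled U D) (hCD : C ⊆ D) : GradientControlled U C := by
  obtain ⟨L, hL, K, hKU, hK, hosc⟩ := hD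
  exact ⟨L, hL, K, hKU, hK, fun F hF g hg hFg x hx y hy =>
    hosc F hF g hg hFg x (hCD hx) y (hCD hy)⟩

lemma union (hC : GradientControlled U C) (hD : GradientControlled U D) (hxC : x ∈ C)
    (hxD : x ∈ D) : GradientControlled U (C ∪ D) := by
  obtain ⟨L₁, hL₁, K₁, hK₁U, hK₁, hosc₁⟩ := hC
  obtain ⟨L₂, hL₂, K₂, hK₂U, hK₂, hosc₂⟩ := hD
  refine ⟨L₁ + L₂ + (L₁ + L₂), by positivity, K₁ ∪ K₂, union_subset hK₁U hK₂U, hK₁.union hK₂,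
    fun F hF g hg hFg y hy z hz => ?_⟩
  have to_center : ∀ w ∈ C ∪ D, |F w - F x| ≤ (L₁ + L₂) * g := by
    rintro w (hw | hw)
    · calc |F w - F x| ≤ L₁ * g := hosc₁ F hF g hg (fun v hv => hFg v (.inl hv)) w hw x hxC
        _ ≤ (L₁ + L₂) * g := by gcongr; linarith
    · calc |F w - F x| ≤ L₂ * g := hosc₂ F hF g hg (fun v hv => hFg v (.inr hv)) w hw x hxD
        _ ≤ (L₁ + L₂) * g := by gcongr; linarith
  calc |F y - F z| ≤ |F y - F x| + |F x - F z| := abs_sub_le _ _ _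
    _ ≤ (L₁ + L₂) * g + (L₁ + L₂) * g :=
        add_le_add (to_center y hy) (abs_sub_comm (F x) (F z) ▸ to_center z hz)
    _ = (L₁ + L₂ + (L₁ + L₂)) * g := by ring

variable [ProperSpace E]

lemma closedBall {r : ℝ} (hr : 0 ≤ r) (hU : Metric.closedBall x r ⊆ U) :
    GradientControlled U (Metric.closedBall x r) := by
  refine ⟨2 * r, by positivity, _, hU, isCompact_closedBall x r, fun F hF g hg hFg y hy z hz => ?_⟩
  calc |F y - F z| ≤ g * ‖y - z‖ :=
        (convex_closedBall x r).norm_image_sub_le_of_norm_fderiv_le (𝕜 := ℝ) (fun w _ => hF w)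
          hFg hz hy
    _ ≤ g * (2 * r) := by
        gcongr
        rw [← dist_eq_norm]
        linarith [dist_triangle_right y z x, Metric.mem_closedBall.1 hy, Metric.mem_closedBall.1 hz]
    _ = 2 * r * g := mul_comm _ _

lemma exists_closedBall (hU : IsOpen U) (hx : x ∈ U) :
    ∃ r > 0, GradientControlled U (Metric.closedBall x r) := by
  obtain ⟨r, hr, hball⟩ := Metric.nhds_basis_closedBall.mem_iff.1 (hU.mem_nhds hx)
  exact ⟨r, hr, closedBall hr.le hball⟩

lemma pair_of_isPreconnected (hU : IsOpen U) (hs : IsPreconnected s) (hsU : s ⊆ U) (hx : x ∈ s)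
    (hy : y ∈ s) : GradientControlled U {x, y} := by
  refine hs.induction₂ (fun x y => GradientControlled U {x, y}) (fun x hx => ?_) ?_ ?_ hx hy
  · obtain ⟨r, hr, hball⟩ := exists_closedBall hU (hsU hx)
    filter_upwards [mem_nhdsWithin_of_mem_nhds (Metric.closedBall_mem_nhds x hr)] with y hy
    exact hball.mono (pair_subset (Metric.mem_closedBall_self hr.le) hy)
  · rintro x y z - - - hxy hyz
    exact (hxy.union hyz (x := y) (by simp) (by simp)).mono (pair_subset (by simp) (by simp))
  · rintro x y - - hxy
    rwa [pair_comm]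

lemma of_isCompact (hU : IsOpen U) (hs : IsPreconnected s) (hsU : s ⊆ U) (hC : IsCompact C)
    (hCs : C ⊆ s) : GradientControlled U C := by
  obtain rfl | ⟨x, hxC⟩ := C.eq_empty_or_nonempty
  · exact ⟨0, le_rfl, ∅, empty_subset U, isCompact_empty, by simp⟩
  suffices GradientControlled U (insert x C) from this.mono (subset_insert x C)
  refine hC.induction_on (p := fun D => GradientControlled U (insert x D)) ?_ ?_ ?_ fun y hy => ?_
  · simpa using pair_of_isPreconnected hU hs hsU (hCs hxC) (hCs hxC)
  · exact fun D D' hDD' hD' => hD'.mono (insert_subset_insert hDD')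
  · intro D D' hD hD'
    rw [insert_union_distrib]
    exact hD.union hD' (mem_insert x D) (mem_insert x D')
  · obtain ⟨r, hr, hball⟩ := exists_closedBall hU (hsU (hCs hy))
    refine ⟨_, mem_nhdsWithin_of_mem_nhds (Metric.closedBall_mem_nhds y hr), ?_⟩
    have hpair := pair_of_isPreconnected hU hs hsU (hCs hxC) (hCs hy)
    exact (hpair.union hball (x := y) (by simp) (Metric.mem_closedBall_self hr.le)).mono
      (insert_subset (by simp) subset_union_right)

end GradientControlled

end GradientControl

section Gradient

open scoped Gradient RealInnerProductSpace

variable {E : Type*} [NormedAddCommGroup E] [InnerProductSpace ℝ E] [CompleteSpace E]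
  {f g : E → ℝ} {x : E}

lemma gradient_mul (hf : DifferentiableAt ℝ f x) (hg : DifferentiableAt ℝ g x) :
    ∇ (fun y => f y * g y) x = f x • ∇ g x + g x • ∇ f x := by
  refine ext_inner_right ℝ fun v => ?_
  simp only [inner_gradient_left, inner_add_left, real_inner_smul_left, fderiv_fun_mul hf hg,
    add_apply, smul_apply, smul_eq_mul]

lemma gradient_add_smul (hf : DifferentiableAt ℝ f x) (hg : DifferentiableAt ℝ g x) (t : ℝ) :
    ∇ (f + t • g) x = ∇ f x + t • ∇ g x := by
  refine ext_inner_right ℝ fun v => ?_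
  simp only [inner_gradient_left, inner_add_left, real_inner_smul_left,
    fderiv_add hf (hg.const_smul t), fderiv_const_smul hg, add_apply, smul_apply,
    smul_eq_mul]

lemma contDiff_gradient {n : WithTop ℕ∞} (hf : ContDiff ℝ (n + 1) f) : ContDiff ℝ n (∇ f) :=
  (InnerProductSpace.toDual ℝ E).symm.contDiff.comp (hf.fderiv_right le_rfl)

lemma hasCompactSupport_gradient (hf : HasCompactSupport f) : HasCompactSupport (∇ f) :=
  (hf.fderiv ℝ).comp_left (map_zero (InnerProductSpace.toDual ℝ E).symm)

section Measure

variable [MeasurableSpace E] [BorelSpace E] {μ : Measure E}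

lemma measurable_gradient (f : E → ℝ) : Measurable (∇ f) :=
  (InnerProductSpace.toDual ℝ E).symm.continuous.measurable.comp (measurable_fderiv ℝ f)

lemma locallyIntegrable_sq_norm_gradient [LocallyCompactSpace E] {w : E → ℝ}
    (hw : Continuous w) (hw0 : ∀ y, 0 < w y) (hf : Integrable (fun y => w y * ‖∇ f y‖ ^ 2) μ) :
    LocallyIntegrable (fun y => ‖∇ f y‖ ^ 2) μ := by
  refine (hf.locallyIntegrable.continuous_mul (hw.inv₀ fun y => (hw0 y).ne')).congr ?_
  exact Eventually.of_forall fun y => inv_mul_cancel_left₀ (hw0 y).ne' _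

lemma locallyIntegrable_gradient [SecondCountableTopology E] [IsLocallyFiniteMeasure μ]
    (hf : LocallyIntegrable (fun y => ‖∇ f y‖ ^ 2) μ) : LocallyIntegrable (∇ f) μ := by
  refine ((locallyIntegrable_const (1 : ℝ)).add hf).mono
    (measurable_gradient f).aestronglyMeasurable (Eventually.of_forall fun y => ?_)
  rw [Pi.add_apply, Real.norm_of_nonneg (by positivity)]
  nlinarith [sq_nonneg (‖∇ f y‖ - 1)]

end Measure

end Gradient

section Divergence

open scoped Gradient RealInnerProductSpace

variable {d : ℕ} {f : Euc d → ℝ} {F G : Euc d → Euc d} {x : Euc d}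

lemma diverg_eq_trace (hF : DifferentiableAt ℝ F x) :
    diverg F x = ∑ j, fderiv ℝ F x (EuclideanSpace.single j 1) j := by
  refine Finset.sum_congr rfl fun j _ => ?_
  have hcoord := (PiLp.proj 2 (fun _ : Fin d => ℝ) j (𝕜 := ℝ)).hasFDerivAt.comp x hF.hasFDerivAt
  have heq : HasFDerivAt (fun ζ => F ζ j) _ x := hcoord
  rw [heq.fderiv]
  rfl

lemma diverg_add (hF : DifferentiableAt ℝ F x) (hG : DifferentiableAt ℝ G x) :
    diverg (fun y => F y + G y) x = diverg F x + diverg G x := by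
  rw [diverg_eq_trace hF, diverg_eq_trace hG, diverg_eq_trace (hF.fun_add hG), fderiv_fun_add hF hG,
    ← Finset.sum_add_distrib]
  rfl

lemma diverg_smul (hf : DifferentiableAt ℝ f x) (hF : DifferentiableAt ℝ F x) :
    diverg (fun y => f y • F y) x = ⟪∇ f x, F x⟫ + f x * diverg F x := by
  rw [diverg_eq_trace hF, diverg_eq_trace (hf.fun_smul hF), fderiv_fun_smul hf hF, PiLp.inner_apply,
    Finset.mul_sum, ← Finset.sum_add_distrib]
  refine Finset.sum_congr rfl fun j _ => ?_
  have hpartial : (∇ f x) j = fderiv ℝ f x (EuclideanSpace.single j 1) := by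
    simp [← inner_gradient_left, EuclideanSpace.inner_single_right]
  simp [hpartial]
  ring

lemma continuous_diverg (hF : ContDiff ℝ 1 F) : Continuous (diverg F) := by
  have heq : diverg F = fun y => ∑ j, fderiv ℝ F y (EuclideanSpace.single j 1) j :=
    funext fun y => diverg_eq_trace (hF.differentiable one_ne_zero y)
  have := hF.continuous_fderiv one_ne_zero
  rw [heq]
  fun_prop

lemma hasCompactSupport_diverg (hF : HasCompactSupport F) : HasCompactSupport (diverg F) := by
  refine hF.mono' fun x hx => ?_
  contrapose! hx
  have hzero : F =ᶠ[𝓝 x] 0 := notMem_tsupport_iff_eventuallyEq.1 hx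
  refine Function.notMem_support.2 (Finset.sum_eq_zero fun j _ => ?_)
  have hcoord : (fun ζ => F ζ j) =ᶠ[𝓝 x] fun _ => 0 := hzero.mono fun ζ hζ => by simp [hζ]
  simp [hcoord.fderiv_eq]

lemma integrable_mul_diverg (hf : Continuous f) (hF : ContDiff ℝ 1 F)
    (hFc : HasCompactSupport F) : Integrable fun x => f x * diverg F x :=
  (hf.mul (continuous_diverg hF)).integrable_of_hasCompactSupport
    (hasCompactSupport_diverg hFc).mul_left

lemma integrable_inner_of_hasCompactSupport (hG : LocallyIntegrable G) (hF : Continuous F)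
    (hFc : HasCompactSupport F) : Integrable fun x => ⟪G x, F x⟫ := by
  have hsmul : Integrable fun x => ‖F x‖ • G x :=
    hG.integrable_smul_left_of_hasCompactSupport hF.norm hFc.norm
  refine hsmul.mono (hG.aestronglyMeasurable.inner hF.aestronglyMeasurable)
    (Eventually.of_forall fun x => ?_)
  rw [norm_smul, norm_norm, mul_comm]
  exact norm_inner_le_norm _ _

lemma integral_mul_diverg (hf : Differentiable ℝ f) (hloc : LocallyIntegrable (∇ f))
    (hF : ContDiff ℝ 1 F) (hFc : HasCompactSupport F) :
    ∫ x, f x * diverg F x = -∫ x, ⟪∇ f x, F x⟫ := by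
  set e : Fin d → Euc d := fun j => EuclideanSpace.single j 1
  have hFj (j : Fin d) : ContDiff ℝ 1 fun x => F x j := (contDiff_euclidean.1 hF) j
  have hFjc (j : Fin d) : HasCompactSupport fun x => F x j :=
    hFc.comp_left (g := fun v : Euc d => v j) rfl
  have hinner : (fun x => ⟪∇ f x, F x⟫) = fun x => ∑ j, fderiv ℝ f x (e j) * F x j := by
    funext x
    simp [PiLp.inner_apply, e, ← inner_gradient_left, mul_comm]
  have hint₁ (j : Fin d) : Integrable fun x => fderiv ℝ f x (e j) * F x j := by
    simpa [inner_smul_right, inner_gradient_left, mul_comm] using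
      integrable_inner_of_hasCompactSupport (F := fun x => F x j • e j) hloc
        ((hFj j).continuous.smul continuous_const) (hFjc j).smul_right
  have hint₂ (j : Fin d) : Integrable fun x => f x * fderiv ℝ (fun ζ => F ζ j) x (e j) :=
    (hf.continuous.mul (((hFj j).continuous_fderiv one_ne_zero).clm_apply
      continuous_const)).integrable_of_hasCompactSupport ((hFjc j).fderiv_apply ℝ (e j)).mul_left
  have hparts (j : Fin d) : ∫ x, f x * fderiv ℝ (fun ζ => F ζ j) x (e j)
      = -∫ x, fderiv ℝ f x (e j) * F x j :=
    integral_mul_fderiv_eq_neg_fderiv_mul_of_integrable (hint₁ j) (hint₂ j)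
      ((hf.continuous.mul (hFj j).continuous).integrable_of_hasCompactSupport (hFjc j).mul_left)
      (fun x _ => hf x) (fun x _ => (hFj j).differentiable one_ne_zero x)
  simp only [diverg, Finset.mul_sum]
  rw [integral_finsetSum _ fun j _ => hint₂ j, hinner, integral_finsetSum _ fun j _ => hint₁ j,
    ← Finset.sum_neg_distrib]
  exact Finset.sum_congr rfl fun j _ => hparts j

end Divergence

section Integration

variable {α F : Type*} [MeasurableSpace α] [NormedAddCommGroup F] {μ : Measure α}

lemma setIntegral_norm_le_sqrt_mul_sqrt {s : Set α} {f : α → F} (hs : μ s ≠ ⊤)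
    (hf : AEStronglyMeasurable f (μ.restrict s)) (hsq : IntegrableOn (fun x => ‖f x‖ ^ 2) s μ) :
    ∫ x in s, ‖f x‖ ∂μ ≤ √(μ.real s) * √(∫ x in s, ‖f x‖ ^ 2 ∂μ) := by
  have : IsFiniteMeasure (μ.restrict s) := ⟨by simpa using hs.lt_top⟩
  have hf₂ : MemLp f (ENNReal.ofReal 2) (μ.restrict s) := by
    simpa using (memLp_two_iff_integrable_sq_norm hf).2 hsq
  have holder := integral_mul_norm_le_Lp_mul_Lq Real.HolderConjugate.two_two
    (memLp_const (1 : ℝ)) hf₂.norm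
  simpa [Real.sqrt_eq_rpow, Measure.real] using holder

lemma abs_integral_le_mul_measureReal {s : Set α} {f : α → ℝ} {c : ℝ} (hs : μ s ≠ ⊤)
    (hfs : ∀ x ∉ s, f x = 0) (hfc : ∀ x ∈ s, |f x| ≤ c) : |∫ x, f x ∂μ| ≤ c * μ.real s := by
  rw [← setIntegral_eq_integral_of_forall_compl_eq_zero hfs]
  exact norm_setIntegral_le_of_norm_le_const (f := f) hs.lt_top hfc

lemma volume_real_ball_eq_pow_mul {d : ℕ} {r : ℝ} (hr : 0 < r) (y : Euc d) :
    volume.real (Metric.ball y r) = r ^ d * volume.real (Metric.ball (0 : Euc d) 1) := by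
  rw [Measure.real, Measure.addHaar_ball_of_pos _ _ hr, ENNReal.toReal_mul,
    ENNReal.toReal_ofReal (by positivity), finrank_euclideanSpace_fin, Measure.real]

lemma volume_real_ball_le {d : ℕ} {r : ℝ} (hr : r ∈ Ioc (0 : ℝ) 1) (y : Euc d) :
    volume.real (Metric.ball y r) ≤ volume.real (Metric.ball (0 : Euc d) 1) := by
  rw [volume_real_ball_eq_pow_mul hr.1]
  exact mul_le_of_le_one_left measureReal_nonneg (pow_le_one₀ hr.1.le hr.2)

end Integration

section RadialKernel

open scoped Gradient RealInnerProductSpace ContDiff Convolution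

/-- A smooth probability density `ker` on the unit ball of `ℝ^d` together with a compactly supported
potential `pot` of the field `-ker(z) z`. It is used to mollify: the potential is what turns the
derivative of a mollification in its radius into the integral of a Laplacian. -/
structure RadialKernel (d : ℕ) where
  ker : Euc d → ℝ
  pot : Euc d → ℝ
  contDiff_ker : ContDiff ℝ ∞ ker
  contDiff_pot : ContDiff ℝ ∞ pot
  ker_nonneg : ∀ z, 0 ≤ ker z
  ker_eq_zero : ∀ z, 1 ≤ ‖z‖ → ker z = 0
  pot_eq_zero : ∀ z, 1 ≤ ‖z‖ → pot z = 0
  gradient_pot : ∀ z, ∇ pot z = -(ker z • z)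
  integral_ker : ∫ z, ker z = 1

variable {d : ℕ}

lemma contDiff_deriv_smoothTransition : ContDiff ℝ ∞ (deriv smoothTransition) :=
  (contDiff_infty_iff_deriv.1 smoothTransition.contDiff).2

lemma deriv_smoothTransition_of_nonpos {x : ℝ} (hx : x ≤ 0) : deriv smoothTransition x = 0 := by
  refine IsLocalMin.deriv_eq_zero (Eventually.of_forall fun y => ?_)
  rw [smoothTransition.zero_of_nonpos hx]
  exact smoothTransition.nonneg y

lemma exists_deriv_smoothTransition_pos : ∃ c ∈ Ioo (0 : ℝ) 1, 0 < deriv smoothTransition c := by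
  obtain ⟨c, hc, hslope⟩ := exists_deriv_eq_slope smoothTransition (zero_lt_one' ℝ)
    smoothTransition.continuous.continuousOn
    ((smoothTransition.contDiff (n := 1)).differentiable one_ne_zero).differentiableOn
  refine ⟨c, hc, ?_⟩
  simp [hslope, smoothTransition.zero, smoothTransition.one]

lemma contDiff_one_sub_norm_sq : ContDiff ℝ ∞ fun z : Euc d => 1 - ‖z‖ ^ 2 :=
  contDiff_const.sub (contDiff_norm_sq ℝ)

lemma integral_deriv_smoothTransition_pos (hd : 1 ≤ d) :
    0 < ∫ z : Euc d, deriv smoothTransition (1 - ‖z‖ ^ 2) := by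
  obtain ⟨c, hc, hpos⟩ := exists_deriv_smoothTransition_pos
  refine (contDiff_deriv_smoothTransition.comp
    contDiff_one_sub_norm_sq).continuous.integral_pos_of_hasCompactSupport_nonneg_nonzero
    (.intro (isCompact_closedBall 0 1) fun z hz => ?_)
    (fun z => smoothTransition.monotone.deriv_nonneg)
    (x := EuclideanSpace.single ⟨0, hd⟩ √(1 - c)) ?_
  · rw [mem_closedBall_zero_iff, not_le] at hz
    exact deriv_smoothTransition_of_nonpos (by nlinarith)
  · simpa [Real.sq_sqrt (sub_nonneg.2 hc.2.le)] using hpos.ne'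

lemma gradient_smoothTransition_one_sub_norm_sq (z : Euc d) :
    ∇ (fun z : Euc d => smoothTransition (1 - ‖z‖ ^ 2)) z
      = -(2 * deriv smoothTransition (1 - ‖z‖ ^ 2)) • z := by
  refine ext_inner_right ℝ fun v => ?_
  have hnorm : HasFDerivAt (fun z : Euc d => 1 - ‖z‖ ^ 2) (-(2 • innerSL ℝ z)) z :=
    (hasStrictFDerivAt_norm_sq z).hasFDerivAt.const_sub 1
  have hs : HasDerivAt smoothTransition (deriv smoothTransition (1 - ‖z‖ ^ 2)) (1 - ‖z‖ ^ 2) :=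
    ((smoothTransition.contDiff (n := 1)).differentiable one_ne_zero _).hasDerivAt
  have hcomp := hs.comp_hasFDerivAt z hnorm
  have heq : fderiv ℝ (fun z : Euc d => smoothTransition (1 - ‖z‖ ^ 2)) z = _ := hcomp.fderiv
  rw [inner_gradient_left, heq, real_inner_smul_left]
  simp
  ring

namespace RadialKernel

lemma nonempty (hd : 1 ≤ d) : Nonempty (RadialKernel d) := by
  set I := ∫ z : Euc d, 2 * deriv smoothTransition (1 - ‖z‖ ^ 2) with hI
  have hIpos : 0 < I := by
    rw [hI, integral_const_mul]
    exact mul_pos two_pos (integral_deriv_smoothTransition_pos hd)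
  have sub_nonpos_of_norm {z : Euc d} (hz : 1 ≤ ‖z‖) : 1 - ‖z‖ ^ 2 ≤ 0 := by nlinarith
  have hpot : ContDiff ℝ ∞ fun z : Euc d => smoothTransition (1 - ‖z‖ ^ 2) :=
    smoothTransition.contDiff.comp contDiff_one_sub_norm_sq
  refine ⟨⟨fun z => I⁻¹ * (2 * deriv smoothTransition (1 - ‖z‖ ^ 2)),
    fun z => I⁻¹ * smoothTransition (1 - ‖z‖ ^ 2),
    contDiff_const.mul (contDiff_const.mul
      (contDiff_deriv_smoothTransition.comp contDiff_one_sub_norm_sq)),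
    contDiff_const.mul hpot,
    fun z => mul_nonneg (inv_nonneg.2 hIpos.le)
      (mul_nonneg zero_le_two smoothTransition.monotone.deriv_nonneg),
    fun z hz => by rw [deriv_smoothTransition_of_nonpos (sub_nonpos_of_norm hz)]; simp,
    fun z hz => by rw [smoothTransition.zero_of_nonpos (sub_nonpos_of_norm hz), mul_zero],
    fun z => ?_, ?_⟩⟩
  · rw [gradient_mul (differentiableAt_const _) (hpot.differentiable (by simp) z),
      gradient_smoothTransition_one_sub_norm_sq, gradient_fun_const, smul_zero, add_zero,
      smul_smul, mul_neg, neg_smul]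
  · rw [integral_const_mul, ← hI, inv_mul_cancel₀ hIpos.ne']

variable (k : RadialKernel d) {φ : Euc d → ℝ} {r : ℝ} {x y t : Euc d}

lemma hasCompactSupport_ker : HasCompactSupport k.ker :=
  .intro (isCompact_closedBall 0 1) fun z hz =>
    k.ker_eq_zero z (not_le.1 fun h => hz (by simpa using h)).le

lemma hasCompactSupport_pot : HasCompactSupport k.pot :=
  .intro (isCompact_closedBall 0 1) fun z hz =>
    k.pot_eq_zero z (not_le.1 fun h => hz (by simpa using h)).le

/-- The kernel rescaled to a probability density on the ball of radius `r`. -/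
def scaled (r : ℝ) (x : Euc d) : ℝ := (r ^ d)⁻¹ * k.ker (r⁻¹ • x)

/-- The mollification of `φ` at scale `r`. -/
def mollify (r : ℝ) (φ : Euc d → ℝ) : Euc d → ℝ :=
  φ ⋆[ContinuousLinearMap.mul ℝ ℝ, volume] k.scaled r

/-- The potential rescaled to the ball of radius `r` about `y`. -/
def bump (r : ℝ) (y t : Euc d) : ℝ := k.pot (r⁻¹ • (y - t))

lemma one_le_norm_inv_smul (hr : 0 < r) (hx : r ≤ ‖x‖) : 1 ≤ ‖r⁻¹ • x‖ := by
  rwa [norm_smul, norm_inv, Real.norm_of_nonneg hr.le, one_le_inv_mul₀ hr]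

lemma scaled_nonneg (hr : 0 < r) (x : Euc d) : 0 ≤ k.scaled r x :=
  mul_nonneg (by positivity) (k.ker_nonneg _)

lemma scaled_eq_zero (hr : 0 < r) (hx : r ≤ ‖x‖) : k.scaled r x = 0 := by
  rw [scaled, k.ker_eq_zero _ (one_le_norm_inv_smul hr hx), mul_zero]

lemma integral_scaled (hr : 0 < r) : ∫ x, k.scaled r x = 1 := by
  simp_rw [scaled]
  rw [integral_const_mul, Measure.integral_comp_smul]
  simp [k.integral_ker, abs_of_pos hr, hr.ne']

lemma contDiff_bump (r : ℝ) (y : Euc d) : ContDiff ℝ ∞ (k.bump r y) :=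
  k.contDiff_pot.comp (by fun_prop)

lemma bump_eq_zero (hr : 0 < r) (ht : t ∉ Metric.ball y r) : k.bump r y t = 0 := by
  refine k.pot_eq_zero _ (one_le_norm_inv_smul hr ?_)
  rwa [← dist_eq_norm, dist_comm, ← not_lt]

lemma hasCompactSupport_bump (hr : 0 < r) (y : Euc d) : HasCompactSupport (k.bump r y) :=
  .intro (isCompact_closedBall y r) fun _ ht =>
    k.bump_eq_zero hr fun h => ht (Metric.ball_subset_closedBall h)

lemma tendsto_mollify (hφ : Continuous φ) (y : Euc d) :
    Tendsto (fun r => k.mollify r φ y) (𝓝[>] 0) (𝓝 (φ y)) := by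
  have hpos : ∀ᶠ r : ℝ in 𝓝[>] 0, 0 < r := self_mem_nhdsWithin
  have hconv := convolution_tendsto_right (μ := volume) (g := fun _ => φ) (φ := k.scaled)
    (l := 𝓝[>] 0) (k := fun _ => y) (hpos.mono fun r hr x => k.scaled_nonneg hr x)
    (hpos.mono fun r hr => k.integral_scaled hr) ?_
    (Eventually.of_forall fun _ => hφ.aestronglyMeasurable)
    ((hφ.tendsto y).comp tendsto_snd) tendsto_const_nhds
  · refine hconv.congr fun r => ?_
    rw [mollify, ← convolution_flip]
    simp only [convolution_def, ContinuousLinearMap.flip_apply, ContinuousLinearMap.lsmul_apply,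
      ContinuousLinearMap.mul_apply', smul_eq_mul, mul_comm]
  · rw [tendsto_smallSets_iff]
    intro u hu
    obtain ⟨e, he, hball⟩ := Metric.mem_nhds_iff.1 hu
    filter_upwards [Ioo_mem_nhdsGT he] with r hr x hx
    refine hball (mem_ball_zero_iff.2 ?_)
    by_contra! hex
    exact hx (k.scaled_eq_zero hr.1 (hr.2.le.trans hex))

lemma contDiffOn_scaled : ContDiffOn ℝ 1 ↿k.scaled (Ioi 0 ×ˢ univ) := by
  have hfst : ∀ q ∈ (Ioi 0 ×ˢ univ : Set (ℝ × Euc d)), q.1 ≠ 0 := fun q hq => ne_of_gt hq.1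
  have hker : ContDiff ℝ 1 k.ker := k.contDiff_ker.of_le (by norm_cast)
  exact ((contDiffOn_fst.pow d).inv fun q hq => pow_ne_zero d (hfst q hq)).mul
    (hker.comp_contDiffOn ((contDiffOn_fst.inv hfst).smul contDiffOn_snd))

lemma differentiableAt_scaled (hr : 0 < r) (x : Euc d) : DifferentiableAt ℝ ↿k.scaled (r, x) :=
  (k.contDiffOn_scaled.differentiableOn one_ne_zero).differentiableAt
    (prod_mem_nhds (Ioi_mem_nhds hr) univ_mem)

lemma hasFDerivAt_mollify (hφ : Continuous φ) (hr : 0 < r) (y : Euc d) :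
    ∃ A : ℝ × Euc d →L[ℝ] ℝ, HasFDerivAt (fun q : ℝ × Euc d => k.mollify q.1 φ q.2) A (r, y) ∧
      ∀ q, A q = ∫ t, φ t * fderiv ℝ ↿k.scaled (r, y - t) q := by
  have hr' : r ∈ Ioo 0 (2 * r) := ⟨hr, by linarith⟩
  have hsub : Ioo (0 : ℝ) (2 * r) ×ˢ (univ : Set (Euc d)) ⊆ Ioi 0 ×ˢ univ :=
    prod_mono Ioo_subset_Ioi_self subset_rfl
  have hsmooth := k.contDiffOn_scaled.mono hsub
  have hzero : ∀ p, ∀ x : Euc d, p ∈ Ioo 0 (2 * r) → x ∉ Metric.closedBall (0 : Euc d) (2 * r) →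
      k.scaled p x = 0 := fun p x hp hx =>
    k.scaled_eq_zero hp.1 (hp.2.le.trans (not_le.1 fun h => hx (by simpa using h)).le)
  refine ⟨_, hasFDerivAt_convolution_right_with_param (ContinuousLinearMap.mul ℝ ℝ)
    (g := k.scaled) isOpen_Ioo (isCompact_closedBall 0 (2 * r)) hzero hφ.locallyIntegrable
    hsmooth (r, y) hr', fun q => ?_⟩
  rw [convolution_precompR_apply _ hφ.locallyIntegrable]
  · rfl
  · refine .intro (isCompact_closedBall (0 : Euc d) (2 * r)) fun x hx => ?_
    have hnhds : Ioo 0 (2 * r) ×ˢ (Metric.closedBall (0 : Euc d) (2 * r))ᶜ ∈ 𝓝 (r, x) :=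
      prod_mem_nhds (isOpen_Ioo.mem_nhds hr')
        (Metric.isClosed_closedBall.isOpen_compl.mem_nhds hx)
    have hlocal : ↿k.scaled =ᶠ[𝓝 (r, x)] fun _ => 0 := by
      filter_upwards [hnhds] with q hq using hzero q.1 q.2 hq.1 hq.2
    simp [hlocal.fderiv_eq]
  · exact (hsmooth.continuousOn_fderiv_of_isOpen (isOpen_Ioo.prod isOpen_univ)
      le_rfl).comp_continuous (Continuous.prodMk_right _) fun x => ⟨hr', mem_univ _⟩

lemma fderiv_scaled_radius (hr : 0 < r) (x : Euc d) :
    fderiv ℝ ↿k.scaled (r, x) (1, 0) = -(r⁻¹ * (r ^ d)⁻¹ *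
      (d * k.ker (r⁻¹ • x) + fderiv ℝ k.ker (r⁻¹ • x) (r⁻¹ • x))) := by
  have hpath : HasDerivAt (fun s : ℝ => (s, x)) ((1, 0) : ℝ × Euc d) r :=
    (hasDerivAt_id r).prodMk (hasDerivAt_const r x)
  have hpow : HasDerivAt (fun s : ℝ => (s ^ d)⁻¹) (-(d * r⁻¹ * (r ^ d)⁻¹)) r := by
    refine ((hasDerivAt_pow d r).inv (pow_ne_zero d hr.ne')).congr_deriv ?_
    rcases d with _ | d
    · simp
    · simp only [Nat.add_sub_cancel]
      field_simp
      ring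
  have hker : HasDerivAt (fun s : ℝ => k.ker (s⁻¹ • x))
      (fderiv ℝ k.ker (r⁻¹ • x) (-(r ^ 2)⁻¹ • x)) r :=
    (k.contDiff_ker.differentiable (by simp) _).hasFDerivAt.comp_hasDerivAt r
      ((hasDerivAt_inv hr.ne').smul_const x)
  have hscaled := (k.differentiableAt_scaled hr x).hasFDerivAt.comp_hasDerivAt r hpath
  rw [hscaled.unique (hpow.mul hker)]
  simp only [map_smul, smul_eq_mul]
  field_simp
  ring

lemma fderiv_scaled_space (hr : 0 < r) (y t v : Euc d) :
    fderiv ℝ ↿k.scaled (r, y - t) (0, v) = -fderiv ℝ (fun t => k.scaled r (y - t)) t v := by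
  have hpath : HasFDerivAt (fun t : Euc d => (r, y - t))
      ((0 : Euc d →L[ℝ] ℝ).prod (-ContinuousLinearMap.id ℝ (Euc d))) t :=
    (hasFDerivAt_const r t).prodMk ((hasFDerivAt_id t).const_sub y)
  have hscaled := (k.differentiableAt_scaled hr (y - t)).hasFDerivAt.comp t hpath
  have heq : fderiv ℝ (fun t => k.scaled r (y - t)) t = _ := hscaled.fderiv
  rw [heq, ← map_neg]
  simp

lemma gradient_bump (r : ℝ) (y t : Euc d) :
    ∇ (k.bump r y) t = (r⁻¹ * r⁻¹ * k.ker (r⁻¹ • (y - t))) • (y - t) := by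
  have hpath : HasFDerivAt (fun t : Euc d => r⁻¹ • (y - t))
      (r⁻¹ • -ContinuousLinearMap.id ℝ (Euc d)) t := ((hasFDerivAt_id t).const_sub y).const_smul r⁻¹
  have hcomp := (k.contDiff_pot.differentiable (by simp) _).hasFDerivAt.comp t hpath
  have heq : fderiv ℝ (k.bump r y) t = _ := hcomp.fderiv
  refine ext_inner_right ℝ fun v => ?_
  rw [inner_gradient_left, heq]
  simp [← inner_gradient_left, k.gradient_pot, real_inner_smul_left]
  ring

lemma diverg_gradient_bump (r : ℝ) (y t : Euc d) :
    diverg (∇ (k.bump r y)) t = -(r⁻¹ * r⁻¹ *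
      (d * k.ker (r⁻¹ • (y - t)) + fderiv ℝ k.ker (r⁻¹ • (y - t)) (r⁻¹ • (y - t)))) := by
  set f : Euc d → ℝ := fun t => r⁻¹ * r⁻¹ * k.ker (r⁻¹ • (y - t))
  have hpath : HasFDerivAt (fun t : Euc d => r⁻¹ • (y - t))
      (r⁻¹ • -ContinuousLinearMap.id ℝ (Euc d)) t := ((hasFDerivAt_id t).const_sub y).const_smul r⁻¹
  have hf : HasFDerivAt f ((r⁻¹ * r⁻¹) • (fderiv ℝ k.ker (r⁻¹ • (y - t))).comp
      (r⁻¹ • -ContinuousLinearMap.id ℝ (Euc d))) t :=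
    ((k.contDiff_ker.differentiable (by simp) _).hasFDerivAt.comp t hpath).const_mul (r⁻¹ * r⁻¹)
  have hdiv : diverg (fun t => y - t) t = -d := by
    have hsub : HasFDerivAt (fun t => y - t) (-ContinuousLinearMap.id ℝ (Euc d)) t :=
      (hasFDerivAt_id t).const_sub y
    rw [diverg_eq_trace hsub.differentiableAt, hsub.fderiv]
    simp
  rw [funext (k.gradient_bump r y), diverg_smul hf.differentiableAt (by fun_prop), hdiv,
    inner_gradient_left, hf.fderiv]
  simp only [f, smul_apply, ContinuousLinearMap.comp_apply, neg_apply,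
    ContinuousLinearMap.id_apply, smul_neg, map_neg, smul_eq_mul]
  ring

lemma fderiv_scaled_radius_eq_diverg (hr : 0 < r) (y t : Euc d) :
    fderiv ℝ ↿k.scaled (r, y - t) (1, 0) = r * (r ^ d)⁻¹ * diverg (∇ (k.bump r y)) t := by
  rw [k.fderiv_scaled_radius hr, k.diverg_gradient_bump]
  field_simp

lemma hasDerivAt_mollify (hφ : Continuous φ) (hr : 0 < r) (y : Euc d) :
    HasDerivAt (fun s => k.mollify s φ y)
      (r * (r ^ d)⁻¹ * ∫ t, φ t * diverg (∇ (k.bump r y)) t) r := by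
  obtain ⟨A, hA, hA_eq⟩ := k.hasFDerivAt_mollify hφ hr y
  refine (hA.comp_hasDerivAt r ((hasDerivAt_id r).prodMk (hasDerivAt_const r y))).congr_deriv ?_
  rw [hA_eq, ← integral_const_mul]
  refine integral_congr_ae (Eventually.of_forall fun t => ?_)
  simp only [k.fderiv_scaled_radius_eq_diverg hr]
  ring

lemma contDiff_scaled (r : ℝ) (y : Euc d) : ContDiff ℝ ∞ fun t => k.scaled r (y - t) :=
  contDiff_const.mul (k.contDiff_ker.comp (by fun_prop))

lemma scaled_sub_eq_zero (hr : 0 < r) (ht : t ∉ Metric.ball y r) : k.scaled r (y - t) = 0 := by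
  refine k.scaled_eq_zero hr ?_
  rwa [← dist_eq_norm, dist_comm, ← not_lt]

lemma hasCompactSupport_scaled (hr : 0 < r) (y : Euc d) :
    HasCompactSupport fun t => k.scaled r (y - t) :=
  .intro (isCompact_closedBall y r) fun _ ht =>
    k.scaled_sub_eq_zero hr fun h => ht (Metric.ball_subset_closedBall h)

lemma differentiable_mollify (hφ : Continuous φ) (hr : 0 < r) : Differentiable ℝ (k.mollify r φ) :=
  fun y => by
    obtain ⟨A, hA, -⟩ := k.hasFDerivAt_mollify hφ hr y
    exact hA.differentiableAt.comp y (differentiableAt_const r |>.prodMk differentiableAt_id)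

lemma fderiv_mollify (hφ : Differentiable ℝ φ) (hloc : LocallyIntegrable (∇ φ)) (hr : 0 < r)
    (y v : Euc d) :
    fderiv ℝ (k.mollify r φ) y v = ∫ t, ⟪∇ φ t, k.scaled r (y - t) • v⟫ := by
  obtain ⟨A, hA, hA_eq⟩ := k.hasFDerivAt_mollify hφ.continuous hr y
  have hslice := hA.comp y (hasFDerivAt_prodMk_right r y)
  have heq : fderiv ℝ (k.mollify r φ) y = _ := hslice.fderiv
  have hk : ContDiff ℝ 1 fun t => k.scaled r (y - t) := (k.contDiff_scaled r y).of_le (by norm_cast)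
  have hdiv (t : Euc d) : diverg (fun t => k.scaled r (y - t) • v) t
      = fderiv ℝ (fun t => k.scaled r (y - t)) t v := by
    rw [diverg_smul (hk.differentiable one_ne_zero t) (differentiableAt_const v),
      inner_gradient_left]
    simp [diverg]
  have hparts := integral_mul_diverg hφ hloc (hk.smul contDiff_const)
    (k.hasCompactSupport_scaled hr y).smul_right (F := fun t => k.scaled r (y - t) • v)
  rw [heq, ContinuousLinearMap.comp_apply, ContinuousLinearMap.inr_apply, hA_eq, ← neg_inj,
    ← hparts, ← integral_neg]
  refine integral_congr_ae (Eventually.of_forall fun t => ?_)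
  simp only [k.fderiv_scaled_space hr, hdiv]
  ring

lemma exists_norm_fderiv_mollify_le : ∃ C : ℝ, 0 ≤ C ∧ ∀ φ : Euc d → ℝ, Differentiable ℝ φ →
    LocallyIntegrable (fun x => ‖∇ φ x‖ ^ 2) → ∀ r ∈ Ioc (0 : ℝ) 1, ∀ y,
      ‖fderiv ℝ (k.mollify r φ) y‖ ≤ C * (r ^ d)⁻¹ * √(∫ x in Metric.ball y r, ‖∇ φ x‖ ^ 2) := by
  obtain ⟨B, hB⟩ := k.hasCompactSupport_ker.exists_bound_of_continuous k.contDiff_ker.continuous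
  have hB0 : 0 ≤ B := (norm_nonneg _).trans (hB 0)
  refine ⟨B * √(volume.real (Metric.ball (0 : Euc d) 1)), by positivity,
    fun φ hφ hloc r hr y => ?_⟩
  have hr0 : 0 < r := hr.1
  have hloc₁ : LocallyIntegrable (∇ φ) := locallyIntegrable_gradient hloc
  refine ContinuousLinearMap.opNorm_le_bound _ (by positivity) fun v => ?_
  have hsq : IntegrableOn (fun x => ‖∇ φ x‖ ^ 2) (Metric.ball y r) :=
    (hloc.integrableOn_isCompact (isCompact_closedBall y r)).mono_set Metric.ball_subset_closedBall
  have hpt (t : Euc d) : ‖⟪∇ φ t, k.scaled r (y - t) • v⟫‖ ≤ (r ^ d)⁻¹ * B * ‖v‖ * ‖∇ φ t‖ := by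
    have hker : ‖k.scaled r (y - t)‖ ≤ (r ^ d)⁻¹ * B := by
      rw [scaled, norm_mul, Real.norm_of_nonneg (by positivity)]
      exact mul_le_mul_of_nonneg_left (hB _) (by positivity)
    calc ‖⟪∇ φ t, k.scaled r (y - t) • v⟫‖ ≤ ‖∇ φ t‖ * (‖k.scaled r (y - t)‖ * ‖v‖) := by
          rw [← norm_smul]; exact norm_inner_le_norm _ _
      _ ≤ ‖∇ φ t‖ * ((r ^ d)⁻¹ * B * ‖v‖) := by gcongr
      _ = (r ^ d)⁻¹ * B * ‖v‖ * ‖∇ φ t‖ := mul_comm _ _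
  rw [k.fderiv_mollify hφ hloc₁ hr0, ← setIntegral_eq_integral_of_forall_compl_eq_zero
    (s := Metric.ball y r) fun t ht => by rw [k.scaled_sub_eq_zero hr0 ht]; simp]
  calc ‖∫ t in Metric.ball y r, ⟪∇ φ t, k.scaled r (y - t) • v⟫‖
      ≤ ∫ t in Metric.ball y r, (r ^ d)⁻¹ * B * ‖v‖ * ‖∇ φ t‖ :=
        norm_integral_le_of_norm_le
          (((hloc₁.integrableOn_isCompact (isCompact_closedBall y r)).mono_set
            Metric.ball_subset_closedBall).norm.const_mul _) (Eventually.of_forall hpt)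
    _ ≤ (r ^ d)⁻¹ * B * ‖v‖ * (√(volume.real (Metric.ball (0 : Euc d) 1)) *
          √(∫ x in Metric.ball y r, ‖∇ φ x‖ ^ 2)) := by
        rw [integral_const_mul]
        gcongr
        refine (setIntegral_norm_le_sqrt_mul_sqrt measure_ball_lt_top.ne
          (measurable_gradient φ).aestronglyMeasurable hsq).trans ?_
        exact mul_le_mul_of_nonneg_right (sqrt_le_sqrt (volume_real_ball_le hr y)) (sqrt_nonneg _)
    _ = _ := by ring

end RadialKernel

end RadialKernel

section AlmostStationary

open scoped Gradient RealInnerProductSpace ContDiff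

variable {d : ℕ}

/-- The Fokker–Planck operator `ψ ↦ div(∇ψ + ε⁻¹ ψ ∇Φ)`, the formal adjoint of the generator
`e^{Φ/ε} div(e^{-Φ/ε} ∇ ·)` of the overdamped Langevin dynamics. -/
def fokkerPlanck (Φ : Euc d → ℝ) (ε : ℝ) (ψ : Euc d → ℝ) : Euc d → ℝ :=
  diverg fun x => ∇ ψ x + (ψ x / ε) • ∇ Φ x

/-- `φ` is bounded by `M`, has weighted Dirichlet energy at most `E`, and its image under the
generator is bounded by `θ`, the latter in the weak sense of testing against the adjoint. -/
structure IsAlmostStationary (Φ : Euc d → ℝ) (ε E θ M : ℝ) (φ : Euc d → ℝ) : Prop where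
  differentiable : Differentiable ℝ φ
  abs_le : ∀ x, |φ x| ≤ M
  integrable : Integrable fun x => exp (-Φ x / ε) * ‖∇ φ x‖ ^ 2
  energy_le : ∫ x, exp (-Φ x / ε) * ‖∇ φ x‖ ^ 2 ≤ E
  nonneg : 0 ≤ θ
  weak_le : ∀ ψ : Euc d → ℝ, ContDiff ℝ ∞ ψ → HasCompactSupport ψ →
    |∫ x, φ x * fokkerPlanck Φ ε ψ x| ≤ θ * ∫ x, |ψ x|

lemma abs_sub_le_mul_of_tendsto_of_abs_deriv_le {f f' : ℝ → ℝ} {l B r : ℝ} (hr : 0 < r)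
    (hf : ∀ s ∈ Ioc 0 r, HasDerivAt f (f' s) s) (hB : ∀ s ∈ Ioc 0 r, |f' s| ≤ B)
    (hl : Tendsto f (𝓝[>] 0) (𝓝 l)) : |l - f r| ≤ B * r := by
  have hB0 : 0 ≤ B := (abs_nonneg _).trans (hB r ⟨hr, le_rfl⟩)
  refine le_of_tendsto (hl.sub_const (f r)).abs ?_
  filter_upwards [Ioc_mem_nhdsGT hr] with s hs
  calc |f s - f r| ≤ B * ‖s - r‖ := (convex_Ioc 0 r).norm_image_sub_le_of_norm_hasDerivWithin_le
        (fun x hx => (hf x hx).hasDerivWithinAt) hB ⟨hr, le_rfl⟩ hs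
    _ ≤ B * r := by
        gcongr
        rw [Real.norm_eq_abs, abs_le]
        constructor <;> linarith [hs.1, hs.2]

namespace RadialKernel

variable (k : RadialKernel d) {Φ : Euc d → ℝ} {B : Set (Euc d)}

lemma exists_norm_gradient_bump_le :
    ∃ C : ℝ, ∀ s > 0, ∀ y t, ‖∇ (k.bump s y) t‖ ≤ C / s := by
  obtain ⟨C, hC⟩ := k.hasCompactSupport_ker.exists_bound_of_continuous k.contDiff_ker.continuous
  have hC0 : 0 ≤ C := (norm_nonneg _).trans (hC 0)
  refine ⟨C, fun s hs y t => ?_⟩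
  rw [k.gradient_bump]
  obtain hty | hty := le_or_gt s ‖y - t‖
  · rw [k.ker_eq_zero _ (one_le_norm_inv_smul hs hty), mul_zero, zero_smul, norm_zero]
    positivity
  · rw [norm_smul, norm_mul, norm_mul, Real.norm_of_nonneg (inv_nonneg.2 hs.le)]
    calc s⁻¹ * s⁻¹ * ‖k.ker (s⁻¹ • (y - t))‖ * ‖y - t‖ ≤ s⁻¹ * s⁻¹ * C * s := by
          gcongr
          exact hC _
      _ = C / s := by field_simp

lemma gradient_bump_eq_zero {s : ℝ} (hs : 0 < s) {y t : Euc d} (ht : t ∉ Metric.ball y s) :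
    ∇ (k.bump s y) t = 0 := by
  rw [k.gradient_bump, k.ker_eq_zero _ (one_le_norm_inv_smul hs ?_), mul_zero, zero_smul]
  rwa [← dist_eq_norm, dist_comm, ← not_lt]

lemma diverg_bump_smul_eq_zero {F : Euc d → Euc d} (hF : Differentiable ℝ F) {s : ℝ} (hs : 0 < s)
    {y t : Euc d} (ht : t ∉ Metric.ball y s) : diverg (fun t => k.bump s y t • F t) t = 0 := by
  rw [diverg_smul ((k.contDiff_bump s y).differentiable (by simp) t) (hF t),
    k.gradient_bump_eq_zero hs ht, k.bump_eq_zero hs ht, inner_zero_left, zero_mul, add_zero]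

lemma exists_bump_drift_le (hΦ : ContDiff ℝ ∞ Φ) (hB : IsCompact B) :
    ∃ C : ℝ, 0 ≤ C ∧ ∀ s ∈ Ioc (0 : ℝ) 1, ∀ y ∈ B, ∀ t ∈ Metric.ball y s,
      |k.bump s y t| ≤ C ∧ |diverg (fun t => k.bump s y t • ∇ Φ t) t| ≤ C / s := by
  have hΦ' : ContDiff ℝ ∞ (∇ Φ) := contDiff_gradient hΦ
  obtain ⟨P, hP⟩ := k.hasCompactSupport_pot.exists_bound_of_continuous k.contDiff_pot.continuous
  obtain ⟨Q, hQ⟩ := k.exists_norm_gradient_bump_le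
  obtain ⟨G, hG⟩ := (hB.cthickening (r := 1)).exists_bound_of_continuousOn
    hΦ'.continuous.continuousOn
  obtain ⟨L, hL⟩ := (hB.cthickening (r := 1)).exists_bound_of_continuousOn
    (continuous_diverg (hΦ'.of_le (by norm_cast))).continuousOn
  refine ⟨|P| + |Q| * |G| + |P| * |L|, by positivity, fun s hs y hy t ht => ?_⟩
  have hs0 : 0 < s := hs.1
  have ht' : t ∈ Metric.cthickening 1 B :=
    Metric.mem_cthickening_of_dist_le t y 1 B hy ((Metric.mem_ball.1 ht).le.trans hs.2)
  have hbump : |k.bump s y t| ≤ |P| := (hP _).trans (le_abs_self P)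
  refine ⟨hbump.trans (by rw [add_assoc]; exact le_add_of_nonneg_right (by positivity)), ?_⟩
  rw [diverg_smul ((k.contDiff_bump s y).differentiable (by simp) t)
    (hΦ'.differentiable (by simp) t)]
  calc |⟪∇ (k.bump s y) t, ∇ Φ t⟫ + k.bump s y t * diverg (∇ Φ) t|
      ≤ ‖∇ (k.bump s y) t‖ * ‖∇ Φ t‖ + |k.bump s y t| * ‖diverg (∇ Φ) t‖ :=
        (abs_add_le _ _).trans (add_le_add (abs_real_inner_le_norm _ _) (abs_mul _ _).le)
    _ ≤ |Q| / s * |G| + |P| * |L| := by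
        gcongr
        · exact (hQ s hs0 y t).trans (by gcongr; exact le_abs_self Q)
        · exact (hG t ht').trans (le_abs_self G)
        · exact (hL t ht').trans (le_abs_self L)
    _ ≤ (|P| + |Q| * |G| + |P| * |L|) / s := by
        have hscale : |P| * |L| ≤ |P| * |L| / s := le_div_self (by positivity) hs0 hs.2
        have hP0 : 0 ≤ |P| / s := by positivity
        rw [add_div, add_div, div_mul_eq_mul_div]
        linarith

end RadialKernel

lemma fokkerPlanck_eq {Φ ψ : Euc d → ℝ} (hΦ : ContDiff ℝ ∞ Φ) (hψ : ContDiff ℝ ∞ ψ) (ε : ℝ)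
    (x : Euc d) :
    fokkerPlanck Φ ε ψ x = diverg (∇ ψ) x + ε⁻¹ * diverg (fun y => ψ y • ∇ Φ y) x := by
  have hψ' : Differentiable ℝ (∇ ψ) :=
    (contDiff_gradient (n := ∞) hψ).differentiable (by simp)
  have hdrift : DifferentiableAt ℝ (fun y => ψ y • ∇ Φ y) x :=
    (hψ.smul (contDiff_gradient (n := ∞) hΦ)).differentiable (by simp) x
  have hfield : (fun y => ∇ ψ y + (ψ y / ε) • ∇ Φ y) = fun y => ∇ ψ y + ε⁻¹ • ψ y • ∇ Φ y := by
    simp only [smul_smul, div_eq_inv_mul]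
  have hconst : diverg (fun y => ε⁻¹ • ψ y • ∇ Φ y) x
      = ε⁻¹ * diverg (fun y => ψ y • ∇ Φ y) x := by
    rw [diverg_smul (differentiableAt_const ε⁻¹) hdrift]
    simp [gradient_fun_const]
  rw [fokkerPlanck, hfield, diverg_add (hψ' x) (hdrift.fun_const_smul ε⁻¹), hconst]

lemma integral_mul_fokkerPlanck {Φ ψ φ : Euc d → ℝ} (hΦ : ContDiff ℝ ∞ Φ) (hφ : Continuous φ)
    (hψ : ContDiff ℝ ∞ ψ) (hψc : HasCompactSupport ψ) (ε : ℝ) :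
    ∫ x, φ x * fokkerPlanck Φ ε ψ x
      = (∫ x, φ x * diverg (∇ ψ) x) + ε⁻¹ * ∫ x, φ x * diverg (fun y => ψ y • ∇ Φ y) x := by
  have hψ' : ContDiff ℝ ∞ (∇ ψ) := contDiff_gradient hψ
  have hdrift : ContDiff ℝ ∞ fun y => ψ y • ∇ Φ y := hψ.smul (contDiff_gradient hΦ)
  rw [← integral_const_mul, ← integral_add
    (integrable_mul_diverg hφ (hψ'.of_le (by norm_cast)) (hasCompactSupport_gradient hψc))
    ((integrable_mul_diverg hφ (hdrift.of_le (by norm_cast)) hψc.smul_right).const_mul ε⁻¹)]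
  refine integral_congr_ae (Eventually.of_forall fun x => ?_)
  simp only [fokkerPlanck_eq hΦ hψ]
  ring

namespace IsAlmostStationary

variable {Φ φ : Euc d → ℝ} {ε E E' θ θ' M : ℝ}

lemma mono (h : IsAlmostStationary Φ ε E θ M φ) (hE : E ≤ E') (hθ : θ ≤ θ') :
    IsAlmostStationary Φ ε E' θ' M φ where
  differentiable := h.differentiable
  abs_le := h.abs_le
  integrable := h.integrable
  energy_le := h.energy_le.trans hE
  nonneg := h.nonneg.trans hθ
  weak_le ψ hψ hψc := (h.weak_le ψ hψ hψc).trans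
    (mul_le_mul_of_nonneg_right hθ (integral_nonneg fun _ => abs_nonneg _))

lemma locallyIntegrable (h : IsAlmostStationary Φ ε E θ M φ) (hΦ : Continuous Φ) :
    LocallyIntegrable fun x => ‖∇ φ x‖ ^ 2 :=
  locallyIntegrable_sq_norm_gradient (by fun_prop) (fun _ => exp_pos _) h.integrable

lemma setIntegral_sq_norm_gradient_le (h : IsAlmostStationary Φ ε E θ M φ) (hΦ : Continuous Φ)
    (hε : 0 < ε) {a r : ℝ} {y : Euc d} (ha : ∀ x ∈ Metric.ball y r, Φ x ≤ a) :
    ∫ x in Metric.ball y r, ‖∇ φ x‖ ^ 2 ≤ exp (a / ε) * E := by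
  have hloc := ((h.locallyIntegrable hΦ).integrableOn_isCompact
    (isCompact_closedBall y r)).mono_set Metric.ball_subset_closedBall
  calc ∫ x in Metric.ball y r, ‖∇ φ x‖ ^ 2
      ≤ ∫ x in Metric.ball y r, exp (a / ε) * (exp (-Φ x / ε) * ‖∇ φ x‖ ^ 2) := by
        refine setIntegral_mono_on hloc (h.integrable.integrableOn.const_mul _) measurableSet_ball
          fun x hx => ?_
        rw [← mul_assoc, ← exp_add, ← add_div]
        exact le_mul_of_one_le_left (by positivity)
          (one_le_exp (div_nonneg (by linarith [ha x hx]) hε.le))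
    _ ≤ exp (a / ε) * ∫ x, exp (-Φ x / ε) * ‖∇ φ x‖ ^ 2 := by
        rw [integral_const_mul]
        gcongr
        · exact Eventually.of_forall fun x => by positivity
        · exact h.integrable
        · exact Measure.restrict_le_self
    _ ≤ exp (a / ε) * E := by gcongr; exact h.energy_le

lemma exists_abs_integral_mul_diverg_gradient_bump_le (k : RadialKernel d) (hΦ : ContDiff ℝ ∞ Φ)
    {B : Set (Euc d)} (hB : IsCompact B) : ∃ C : ℝ, 0 ≤ C ∧ ∀ {ε E θ M : ℝ} {φ : Euc d → ℝ},
      0 < ε → IsAlmostStationary Φ ε E θ M φ → ∀ s ∈ Ioc (0 : ℝ) 1, ∀ y ∈ B,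
        |∫ t, φ t * diverg (∇ (k.bump s y)) t| ≤ C * s ^ d * ((M / ε + θ) / s) := by
  obtain ⟨C, hC, hbump⟩ := k.exists_bump_drift_le hΦ hB
  set v := volume.real (Metric.ball (0 : Euc d) 1)
  refine ⟨C * v, by positivity, fun {ε E θ M φ} hε h s hs y hy => ?_⟩
  obtain ⟨hs0, hs1⟩ := hs
  have hψ := k.contDiff_bump s y
  have hψc := k.hasCompactSupport_bump hs0 y
  have hΦ' : ContDiff ℝ ∞ (∇ Φ) := contDiff_gradient hΦ
  have hM : 0 ≤ M := (abs_nonneg _).trans (h.abs_le 0)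
  have hmass : ∫ t, |k.bump s y t| ≤ C * (s ^ d * v) := by
    rw [← volume_real_ball_eq_pow_mul hs0 y]
    refine (le_abs_self _).trans (abs_integral_le_mul_measureReal measure_ball_lt_top.ne
      (fun t ht => by rw [k.bump_eq_zero hs0 ht, abs_zero]) fun t ht => ?_)
    rw [abs_abs]
    exact (hbump s ⟨hs0, hs1⟩ y hy t ht).1
  have hdrift_le : |∫ t, φ t * diverg (fun t => k.bump s y t • ∇ Φ t) t|
      ≤ M * (C / s) * (s ^ d * v) := by
    rw [← volume_real_ball_eq_pow_mul hs0 y]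
    refine abs_integral_le_mul_measureReal measure_ball_lt_top.ne (fun t ht => ?_) fun t ht => ?_
    · rw [k.diverg_bump_smul_eq_zero (hΦ'.differentiable (by simp)) hs0 ht, mul_zero]
    · rw [abs_mul]
      exact mul_le_mul (h.abs_le t) (hbump s ⟨hs0, hs1⟩ y hy t ht).2 (abs_nonneg _) hM
  have hadjoint := h.weak_le _ hψ hψc
  rw [integral_mul_fokkerPlanck hΦ h.differentiable.continuous hψ hψc] at hadjoint
  calc |∫ t, φ t * diverg (∇ (k.bump s y)) t|
      ≤ θ * (C * (s ^ d * v)) + ε⁻¹ * (M * (C / s) * (s ^ d * v)) := by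
        rw [← add_sub_cancel_right (∫ t, φ t * diverg (∇ (k.bump s y)) t) (ε⁻¹ * _)]
        refine (abs_sub _ _).trans (add_le_add (hadjoint.trans ?_) ?_)
        · exact mul_le_mul_of_nonneg_left hmass h.nonneg
        · rw [abs_mul, abs_of_pos (inv_pos.2 hε)]
          exact mul_le_mul_of_nonneg_left hdrift_le (inv_nonneg.2 hε.le)
    _ ≤ θ / s * (C * (s ^ d * v)) + ε⁻¹ * (M * (C / s) * (s ^ d * v)) := by
        gcongr
        exact le_div_self h.nonneg hs0 hs1
    _ = C * v * s ^ d * ((M / ε + θ) / s) := by ring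

lemma exists_abs_sub_mollify_le (k : RadialKernel d) (hΦ : ContDiff ℝ ∞ Φ)
    {B : Set (Euc d)} (hB : IsCompact B) : ∃ C : ℝ, 0 ≤ C ∧ ∀ {ε E θ M : ℝ} {φ : Euc d → ℝ},
      0 < ε → IsAlmostStationary Φ ε E θ M φ → ∀ r ∈ Ioc (0 : ℝ) 1, ∀ y ∈ B,
        |φ y - k.mollify r φ y| ≤ C * (r * (M / ε + θ)) := by
  obtain ⟨C, hC, hlap⟩ := exists_abs_integral_mul_diverg_gradient_bump_le k hΦ hB
  refine ⟨C, hC, fun {ε E θ M φ} hε h r hr y hy => ?_⟩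
  have hφ := h.differentiable.continuous
  rw [mul_comm r, ← mul_assoc]
  refine abs_sub_le_mul_of_tendsto_of_abs_deriv_le hr.1
    (fun s hs => k.hasDerivAt_mollify hφ hs.1 y) (fun s hs => ?_) (k.tendsto_mollify hφ y)
  have hs0 : 0 < s := hs.1
  rw [abs_mul, abs_of_pos (by positivity)]
  calc s * (s ^ d)⁻¹ * |∫ t, φ t * diverg (∇ (k.bump s y)) t|
      ≤ s * (s ^ d)⁻¹ * (C * s ^ d * ((M / ε + θ) / s)) := by
        gcongr
        exact hlap hε h s ⟨hs0, hs.2.trans hr.2⟩ y hy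
    _ = C * (M / ε + θ) := by field_simp

/-- Mollifying at scale `r` costs the first term; the second bounds the mollification along a chain
of balls in `{Φ < a}`, where the energy density carries a weight at least `e^{-a'/ε}`. -/
theorem exists_oscillation_le (hd : 1 ≤ d) (hΦ : ContDiff ℝ ∞ Φ) {a : ℝ} {s C : Set (Euc d)}
    (hs : IsPreconnected s) (hsa : ∀ x ∈ s, Φ x < a) (hC : IsCompact C) (hCs : C ⊆ s) :
    ∃ A : ℝ, 0 ≤ A ∧ ∃ R ∈ Ioc (0 : ℝ) 1, ∃ a' < a, ∀ {ε E θ M : ℝ} {φ : Euc d → ℝ},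
      0 < ε → IsAlmostStationary Φ ε E θ M φ → ∀ r ∈ Ioc 0 R, ∀ x ∈ C, ∀ y ∈ C,
        |φ x - φ y| ≤ A * (r * (M / ε + θ) + (r ^ d)⁻¹ * √(exp (a' / ε) * E)) := by
  obtain ⟨k⟩ := RadialKernel.nonempty hd
  have hU : IsOpen {x | Φ x < a} := isOpen_lt hΦ.continuous continuous_const
  obtain ⟨L, hL, K, hKU, hK, hosc⟩ := GradientControlled.of_isCompact hU hs hsa hC hCs
  obtain ⟨δ, hδ, hδU⟩ := hK.exists_cthickening_subset_open hU hKU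
  obtain ⟨a', ha', hΦa'⟩ : ∃ a' < a, ∀ x ∈ Metric.cthickening δ K, Φ x ≤ a' :=
    hK.cthickening.exists_forall_le' (α := ℝᵒᵈ) hΦ.continuous.continuousOn fun x hx => hδU hx
  obtain ⟨A₁, hA₁, hmoll⟩ := exists_abs_sub_mollify_le k hΦ hC
  obtain ⟨A₂, hA₂, hgrad⟩ := k.exists_norm_fderiv_mollify_le
  refine ⟨2 * A₁ + L * A₂, by positivity, min δ 1, ⟨by positivity, min_le_right _ _⟩, a', ha',
    fun {ε E θ M φ} hε h r hr x hx y hy => ?_⟩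
  have hr0 : 0 < r := hr.1
  have hr1 : r ∈ Ioc (0 : ℝ) 1 := ⟨hr0, hr.2.trans (min_le_right _ _)⟩
  have hM : 0 ≤ M := (abs_nonneg _).trans (h.abs_le 0)
  have hθ := h.nonneg
  have hgrad_le : ∀ z ∈ K, ‖fderiv ℝ (k.mollify r φ) z‖
      ≤ A₂ * (r ^ d)⁻¹ * √(exp (a' / ε) * E) := fun z hz => by
    refine (hgrad φ h.differentiable (h.locallyIntegrable hΦ.continuous) r hr1 z).trans ?_
    gcongr
    refine h.setIntegral_sq_norm_gradient_le hΦ.continuous hε fun w hw => hΦa' w ?_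
    exact Metric.mem_cthickening_of_dist_le w z δ K hz
      ((Metric.mem_ball.1 hw).le.trans (hr.2.trans (min_le_left _ _)))
  have hmid := hosc _ (k.differentiable_mollify h.differentiable.continuous hr0) _
    (by positivity) hgrad_le x hx y hy
  have hx' := hmoll hε h r hr1 x hx
  have hy' := hmoll hε h r hr1 y hy
  rw [abs_sub_comm] at hy'
  have htri := (abs_sub_le (φ x) (k.mollify r φ x) (φ y)).trans
    (add_le_add_right (abs_sub_le (k.mollify r φ x) (k.mollify r φ y) (φ y)) _)
  have hcross₁ : 0 ≤ A₁ * ((r ^ d)⁻¹ * √(exp (a' / ε) * E)) := by positivity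
  have hcross₂ : 0 ≤ L * A₂ * (r * (M / ε + θ)) := by positivity
  linarith

end IsAlmostStationary

end AlmostStationary

section Metastable

open scoped ContDiff

variable {d : ℕ}

/-- Almost stationarity on the Arrhenius scale of a barrier of height `H`: the energy is at most
`A ε⁻¹ e^{-H/ε} l`, where `l ≥ 0` plays the role of the gap between two wells. -/
def IsMetastable (Φ : Euc d → ℝ) (H A ε l M : ℝ) (φ : Euc d → ℝ) : Prop :=
  0 ≤ l ∧ IsAlmostStationary Φ ε (A * (ε⁻¹ * exp (-H / ε) * l)) (A * ε⁻¹) M φ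

lemma exists_inv_pow_le_mul_exp (n : ℕ) {b : ℝ} (hb : 0 < b) :
    ∃ C : ℝ, 0 ≤ C ∧ ∀ ε > 0, ε⁻¹ ^ n ≤ C * exp (b / ε) := by
  refine ⟨n.factorial / b ^ n, by positivity, fun ε hε => ?_⟩
  have hexp := pow_div_factorial_le_exp (b / ε) (by positivity) n
  calc ε⁻¹ ^ n = n.factorial / b ^ n * ((b / ε) ^ n / n.factorial) := by
        rw [inv_pow, div_pow]; field_simp
    _ ≤ n.factorial / b ^ n * exp (b / ε) := by gcongr

lemma sqrt_mul_le_add {p q : ℝ} (hp : 0 ≤ p) (hq : 0 ≤ q) : √(p * q) ≤ p + q :=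
  sqrt_le_iff.2 ⟨by positivity, by nlinarith [mul_nonneg hp hq]⟩

lemma inv_pow_mul_sqrt_le (n : ℕ) (a H : ℝ) {A R ν ε l : ℝ} (hA : 0 ≤ A) (hR : 0 < R) (hν : 0 < ν)
    (hε : 0 < ε) (hl : 0 ≤ l) :
    ((R * (ν * ε)) ^ n)⁻¹ * √(exp (a / ε) * (A * (ε⁻¹ * exp (-H / ε) * l)))
      ≤ ν * l + A * R⁻¹ ^ (2 * n) * ((ν⁻¹ * ε⁻¹) ^ (2 * n + 1) * exp ((a - H) / ε)) := by
  have hexp : exp ((a - H) / ε) = exp (a / ε) * exp (-H / ε) := by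
    rw [← exp_add]; ring_nf
  rw [← sqrt_sq (by positivity : 0 ≤ ((R * (ν * ε)) ^ n)⁻¹), ← sqrt_mul (by positivity)]
  refine le_of_eq_of_le (congrArg sqrt ?_) (sqrt_mul_le_add (by positivity) (by positivity))
  rw [hexp]
  simp only [mul_pow, inv_pow, mul_inv]
  field_simp
  ring

namespace IsMetastable

variable {Φ : Euc d → ℝ} {H A a : ℝ} {s C : Set (Euc d)}

lemma exists_oscillation_le (hd : 1 ≤ d) (hΦ : ContDiff ℝ ∞ Φ) (hA : 0 ≤ A) (H : ℝ)
    (hs : IsPreconnected s) (hsa : ∀ x ∈ s, Φ x < a) (hC : IsCompact C) (hCs : C ⊆ s) :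
    ∃ B : ℝ, 0 ≤ B ∧ ∃ a' < a, ∀ {ε l M : ℝ} {φ : Euc d → ℝ}, ε ∈ Ioo 0 1 →
      IsMetastable Φ H A ε l M φ → ∀ ν ∈ Ioc (0 : ℝ) 1, ∀ x ∈ C, ∀ y ∈ C,
        |φ x - φ y| ≤
          B * (ν * (1 + l + M) + (ν⁻¹ * ε⁻¹) ^ (2 * d + 1) * exp ((a' - H) / ε)) := by
  obtain ⟨B, hB, R, ⟨hR, hR1⟩, a', ha', hosc⟩ :=
    IsAlmostStationary.exists_oscillation_le hd hΦ hs hsa hC hCs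
  refine ⟨B * (2 + A + A * R⁻¹ ^ (2 * d)), by positivity, a', ha',
    fun {ε l M φ} hε h ν hν x hx y hy => ?_⟩
  obtain ⟨hl, h⟩ := h
  have hε0 : 0 < ε := hε.1
  have hν0 : 0 < ν := hν.1
  have hM : 0 ≤ M := (abs_nonneg _).trans (h.abs_le 0)
  have hscale : ν * ε ≤ 1 := mul_le_one₀ hν.2 hε0.le hε.2.le
  have hr : R * (ν * ε) ∈ Ioc 0 R := ⟨by positivity, mul_le_of_le_one_right hR.le hscale⟩
  set X := (ν⁻¹ * ε⁻¹) ^ (2 * d + 1) * exp ((a' - H) / ε)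
  have hX0 : 0 ≤ X := by positivity
  have hdrift : R * (ν * ε) * (M / ε + A * ε⁻¹) ≤ ν * (M + A) := by
    calc R * (ν * ε) * (M / ε + A * ε⁻¹) = R * (ν * (M + A)) := by field_simp
      _ ≤ ν * (M + A) := mul_le_of_le_one_left (by positivity) hR1
  have henergy := inv_pow_mul_sqrt_le d a' H hA hR hν0 hε0 hl
  have hsum : R * (ν * ε) * (M / ε + A * ε⁻¹)
      + ((R * (ν * ε)) ^ d)⁻¹ * √(exp (a' / ε) * (A * (ε⁻¹ * exp (-H / ε) * l)))
      ≤ (2 + A + A * R⁻¹ ^ (2 * d)) * (ν * (1 + l + M) + X) := by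
    have hνl : 0 ≤ ν * l := by positivity
    have hνM : 0 ≤ ν * M := by positivity
    have hcross₁ : 0 ≤ (1 + A) * (ν * l + ν * M) := by positivity
    have hcross₂ : 0 ≤ A * R⁻¹ ^ (2 * d) * (ν * (1 + l + M)) := by positivity
    have hcross₃ : 0 ≤ (2 + A) * X := by positivity
    linarith
  calc |φ x - φ y| ≤ B * _ := hosc hε0 h _ hr x hx y hy
    _ ≤ B * _ := mul_le_mul_of_nonneg_left hsum hB
    _ = _ := (mul_assoc _ _ _).symm

lemma exists_oscillation_le_exp_neg (hd : 1 ≤ d) (hΦ : ContDiff ℝ ∞ Φ) (hA : 0 ≤ A)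
    (hs : IsPreconnected s) (hsH : ∀ x ∈ s, Φ x < H) (hC : IsCompact C) (hCs : C ⊆ s) :
    ∃ B : ℝ, 0 ≤ B ∧ ∃ κ > 0, ∀ {ε l M : ℝ} {φ : Euc d → ℝ}, ε ∈ Ioo 0 1 →
      IsMetastable Φ H A ε l M φ → ∀ x ∈ C, ∀ y ∈ C,
        |φ x - φ y| ≤ B * (exp (-κ / ε) * (1 + l + M)) := by
  obtain ⟨B, hB, a', ha', hosc⟩ := exists_oscillation_le hd hΦ hA H hs hsH hC hCs
  obtain ⟨κ, hκ, hκ_eq⟩ : ∃ κ > 0, a' - H = -(2 * d + 3) * κ :=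
    ⟨(H - a') / (2 * d + 3), by have := sub_pos.2 ha'; positivity, by field_simp; ring⟩
  obtain ⟨P, hP, hpow⟩ := exists_inv_pow_le_mul_exp (2 * d + 1) hκ
  refine ⟨B * (1 + P), by positivity, κ, hκ, fun {ε l M φ} hε h x hx y hy => ?_⟩
  have hM : 0 ≤ M := (abs_nonneg _).trans (h.2.abs_le 0)
  have hl := h.1
  have hν : exp (-κ / ε) ≤ 1 :=
    exp_le_one_iff.2 (div_nonpos_of_nonpos_of_nonneg (by linarith) hε.1.le)
  have hbalance : ((exp (-κ / ε))⁻¹ * ε⁻¹) ^ (2 * d + 1) * exp ((a' - H) / ε)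
      ≤ P * exp (-κ / ε) := by
    calc ((exp (-κ / ε))⁻¹ * ε⁻¹) ^ (2 * d + 1) * exp ((a' - H) / ε)
        = ε⁻¹ ^ (2 * d + 1) * exp (-(κ / ε) - κ / ε) := by
          rw [mul_pow, ← exp_neg, ← exp_nat_mul, mul_comm (exp _), mul_assoc, ← exp_add, hκ_eq]
          push_cast
          ring_nf
      _ ≤ P * exp (κ / ε) * exp (-(κ / ε) - κ / ε) := by gcongr; exact hpow ε hε.1
      _ = P * exp (-κ / ε) := by rw [mul_assoc, ← exp_add]; ring_nf
  have hosc' := hosc hε h _ ⟨exp_pos _, hν⟩ x hx y hy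
  calc |φ x - φ y| ≤ B * (exp (-κ / ε) * (1 + l + M) + P * exp (-κ / ε)) :=
        hosc'.trans (by gcongr)
    _ ≤ B * (exp (-κ / ε) * (1 + l + M) + P * (exp (-κ / ε) * (1 + l + M))) := by
        gcongr
        exact le_mul_of_one_le_right (exp_nonneg _) (by linarith)
    _ = B * (1 + P) * (exp (-κ / ε) * (1 + l + M)) := by ring

lemma exists_oscillation_le_subexp (hd : 1 ≤ d) (hΦ : ContDiff ℝ ∞ Φ) (hA : 0 ≤ A)
    (hs : IsPreconnected s) (hsH : ∀ x ∈ s, Φ x ≤ H) (hC : IsCompact C) (hCs : C ⊆ s)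
    {b ν : ℝ} (hb : 0 < b) (hν : 0 < ν) :
    ∃ B : ℝ, 0 ≤ B ∧ ∀ {ε l M : ℝ} {φ : Euc d → ℝ}, ε ∈ Ioo 0 1 →
      IsMetastable Φ H A ε l M φ → ∀ x ∈ C, ∀ y ∈ C,
        |φ x - φ y| ≤ ν * (1 + l + M) + B * exp (b / ε) := by
  obtain ⟨B, hB, a', ha', hosc⟩ := exists_oscillation_le hd hΦ hA H hs
    (fun x hx => (hsH x hx).trans_lt (lt_add_of_pos_right H (half_pos hb))) hC hCs
  obtain ⟨P, hP, hpow⟩ := exists_inv_pow_le_mul_exp (2 * d + 1) (half_pos hb)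
  obtain ⟨ρ, hρ, hρ1, hBρ⟩ : ∃ ρ > 0, ρ ≤ 1 ∧ B * ρ ≤ ν := by
    refine ⟨min 1 (ν / (B + 1)), by positivity, min_le_left _ _, ?_⟩
    calc B * min 1 (ν / (B + 1)) ≤ (B + 1) * (ν / (B + 1)) := by
          gcongr
          · linarith
          · exact min_le_right _ _
      _ = ν := by field_simp
  refine ⟨B * (ρ⁻¹ ^ (2 * d + 1) * P), by positivity, fun {ε l M φ} hε h x hx y hy => ?_⟩
  have hε0 : 0 < ε := hε.1
  have hM : 0 ≤ M := (abs_nonneg _).trans (h.2.abs_le 0)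
  have hl := h.1
  have hgrowth : (ρ⁻¹ * ε⁻¹) ^ (2 * d + 1) * exp ((a' - H) / ε)
      ≤ ρ⁻¹ ^ (2 * d + 1) * P * exp (b / ε) := by
    calc (ρ⁻¹ * ε⁻¹) ^ (2 * d + 1) * exp ((a' - H) / ε)
        ≤ ρ⁻¹ ^ (2 * d + 1) * (P * exp (b / 2 / ε)) * exp (b / 2 / ε) := by
          rw [mul_pow]
          gcongr
          · exact hpow ε hε0
          · linarith
      _ = ρ⁻¹ ^ (2 * d + 1) * P * exp (b / ε) := by
          rw [mul_assoc, mul_assoc, mul_assoc, ← exp_add]; ring_nf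
  calc |φ x - φ y| ≤ B * (ρ * (1 + l + M) + ρ⁻¹ ^ (2 * d + 1) * P * exp (b / ε)) :=
        (hosc hε h ρ ⟨hρ, hρ1⟩ x hx y hy).trans (by gcongr)
    _ = B * ρ * (1 + l + M) + B * (ρ⁻¹ ^ (2 * d + 1) * P) * exp (b / ε) := by ring
    _ ≤ ν * (1 + l + M) + B * (ρ⁻¹ ^ (2 * d + 1) * P) * exp (b / ε) := by gcongr

/-- With `ν = 1/6` the subexponential bound on `D` absorbs the size `1 + l + M`, which the
exponential bound on `C` then beats at half its rate. -/
theorem exists_oscillation_le_exp_neg_of_closed (hd : 1 ≤ d) (hΦ : ContDiff ℝ ∞ Φ) (hA : 0 ≤ A)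
    {U D : Set (Euc d)} (hU : IsPreconnected U) (hUH : ∀ x ∈ U, Φ x ≤ H) (hD : IsCompact D)
    (hDU : D ⊆ U) {φ : ℝ → Euc d → ℝ} {l M : ℝ → ℝ}
    (h : ∀ ε ∈ Ioo 0 1, IsMetastable Φ H A ε (l ε) (M ε) (φ ε))
    (hl : ∀ ε ∈ Ioo 0 1, ∀ B, (∀ x ∈ D, ∀ y ∈ D, |φ ε x - φ ε y| ≤ B) → l ε ≤ B)
    (hM : ∀ ε ∈ Ioo 0 1, ∀ B, (∀ x ∈ D, ∀ y ∈ D, |φ ε x - φ ε y| ≤ B) → M ε ≤ l ε + B)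
    (hs : IsPreconnected s) (hsH : ∀ x ∈ s, Φ x < H) (hC : IsCompact C) (hCs : C ⊆ s) :
    ∃ B : ℝ, 0 ≤ B ∧ ∃ κ > 0, ∀ ε ∈ Ioo 0 1, ∀ x ∈ C, ∀ y ∈ C,
      |φ ε x - φ ε y| ≤ B * exp (-κ / ε) := by
  obtain ⟨B, hB, κ, hκ, hosc⟩ := exists_oscillation_le_exp_neg hd hΦ hA hs hsH hC hCs
  obtain ⟨P, hP, hsub⟩ := exists_oscillation_le_subexp hd hΦ hA hU hUH hD hDU (half_pos hκ)
    (ν := 1 / 6) (by norm_num)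
  refine ⟨B * (2 + 6 * P), by positivity, κ / 2, half_pos hκ, fun ε hε x hx y hy => ?_⟩
  have hosc_D := fun x hx y hy => hsub hε (h ε hε) x hx y hy
  have hsize : 1 + l ε + M ε ≤ (2 + 6 * P) * exp (κ / 2 / ε) := by
    have hexp : 1 ≤ exp (κ / 2 / ε) := one_le_exp (by have := hε.1; positivity)
    linarith [hl ε hε _ hosc_D, hM ε hε _ hosc_D]
  calc |φ ε x - φ ε y| ≤ B * (exp (-κ / ε) * (1 + l ε + M ε)) := hosc hε (h ε hε) x hx y hy
    _ ≤ B * (exp (-κ / ε) * ((2 + 6 * P) * exp (κ / 2 / ε))) := by gcongr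
    _ = B * (2 + 6 * P) * exp (-(κ / 2) / ε) := by
        rw [mul_left_comm (exp _), ← exp_add, ← mul_assoc]; ring_nf

end IsMetastable

end Metastable

section DirichletMinimizer

open scoped Gradient RealInnerProductSpace

variable {E : Type*} [NormedAddCommGroup E] [InnerProductSpace ℝ E] [CompleteSpace E]
  {w : E → ℝ} {T : (E → ℝ) → ℝ} {φ ψ : E → ℝ}

lemma mul_sq_norm_gradient_add_smul (hφ : Differentiable ℝ φ) (hψ : Differentiable ℝ ψ) (t : ℝ) :
    (fun x => w x * ‖∇ (φ + t • ψ) x‖ ^ 2) = fun x => w x * ‖∇ φ x‖ ^ 2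
      + 2 * t * (w x * ⟪∇ φ x, ∇ ψ x⟫) + t * t * (w x * ‖∇ ψ x‖ ^ 2) := by
  funext x
  rw [gradient_add_smul (hφ x) (hψ x), norm_add_sq_real, real_inner_smul_right, norm_smul, mul_pow,
    Real.norm_eq_abs, sq_abs]
  ring

variable [MeasurableSpace E] {μ : Measure E}

/-- `φ` minimises the functional `ψ ↦ ½ ∫ w |∇ψ|² - T ψ` among the differentiable functions of
finite weighted Dirichlet energy. -/
structure IsDirichletMinimizer (μ : Measure E) (w : E → ℝ) (T : (E → ℝ) → ℝ) (φ : E → ℝ) :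
    Prop where
  differentiable : Differentiable ℝ φ
  integrable : Integrable (fun x => w x * ‖∇ φ x‖ ^ 2) μ
  le : ∀ ψ : E → ℝ, Differentiable ℝ ψ → Integrable (fun x => w x * ‖∇ ψ x‖ ^ 2) μ →
    2⁻¹ * ∫ x, w x * ‖∇ φ x‖ ^ 2 ∂μ - T φ ≤ 2⁻¹ * ∫ x, w x * ‖∇ ψ x‖ ^ 2 ∂μ - T ψ

variable [BorelSpace E]

lemma integrable_mul_inner_gradient [SecondCountableTopology E] (hw : Measurable w)
    (hw0 : ∀ x, 0 ≤ w x) (hφ : Integrable (fun x => w x * ‖∇ φ x‖ ^ 2) μ)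
    (hψ : Integrable (fun x => w x * ‖∇ ψ x‖ ^ 2) μ) :
    Integrable (fun x => w x * ⟪∇ φ x, ∇ ψ x⟫) μ := by
  refine (hφ.add hψ).mono' (hw.mul ((measurable_gradient φ).inner
    (measurable_gradient ψ))).aestronglyMeasurable (Eventually.of_forall fun x => ?_)
  rw [norm_mul, Real.norm_of_nonneg (hw0 x), Pi.add_apply, ← mul_add]
  gcongr
  · exact hw0 x
  · nlinarith [norm_inner_le_norm (𝕜 := ℝ) (∇ φ x) (∇ ψ x), sq_nonneg (‖∇ φ x‖ - ‖∇ ψ x‖),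
      sq_nonneg ‖∇ φ x‖, sq_nonneg ‖∇ ψ x‖]

namespace IsDirichletMinimizer

lemma integral_mul_inner_gradient [SecondCountableTopology E]
    (h : IsDirichletMinimizer μ w T φ) (hw : Measurable w) (hw0 : ∀ x, 0 ≤ w x)
    (hψ : Differentiable ℝ ψ) (hψw : Integrable (fun x => w x * ‖∇ ψ x‖ ^ 2) μ)
    (hT : ∀ t : ℝ, T (φ + t • ψ) = T φ + t * T ψ) :
    ∫ x, w x * ⟪∇ φ x, ∇ ψ x⟫ ∂μ = T ψ := by
  have hcross := integrable_mul_inner_gradient hw hw0 h.integrable hψw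
  have hquadratic (t : ℝ) : 0 ≤ 2⁻¹ * (∫ x, w x * ‖∇ ψ x‖ ^ 2 ∂μ) * (t * t)
      + (∫ x, w x * ⟪∇ φ x, ∇ ψ x⟫ ∂μ - T ψ) * t + 0 := by
    have hlin : Integrable
        (fun x => w x * ‖∇ φ x‖ ^ 2 + 2 * t * (w x * ⟪∇ φ x, ∇ ψ x⟫)) μ :=
      h.integrable.add (hcross.const_mul (2 * t))
    have hle := h.le (φ + t • ψ) (h.differentiable.add (hψ.const_smul t))
    rw [mul_sq_norm_gradient_add_smul h.differentiable hψ] at hle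
    specialize hle (hlin.add (hψw.const_mul (t * t)))
    rw [hT, integral_add hlin (hψw.const_mul (t * t)), integral_add h.integrable
      (hcross.const_mul _), integral_const_mul, integral_const_mul] at hle
    linarith
  have hdiscrim := discrim_le_zero hquadratic
  rw [discrim, mul_zero, sub_zero] at hdiscrim
  exact sub_eq_zero.1 (pow_eq_zero_iff two_ne_zero |>.1 (le_antisymm hdiscrim (sq_nonneg _)))

end IsDirichletMinimizer

lemma integrable_mul_sq_norm_gradient [IsFiniteMeasureOnCompacts μ] (hw : Continuous w)
    (hψ : ContDiff ℝ 1 ψ) (hψc : HasCompactSupport ψ) :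
    Integrable (fun x => w x * ‖∇ ψ x‖ ^ 2) μ := by
  have hgrad : Continuous (∇ ψ) := (contDiff_gradient (n := 0) (by rwa [zero_add])).continuous
  have hsupp : HasCompactSupport fun x => ‖∇ ψ x‖ ^ 2 :=
    (hasCompactSupport_gradient hψc).comp_left (g := fun v : E => ‖v‖ ^ 2) (by simp)
  exact (hw.mul (hgrad.norm.pow 2)).integrable_of_hasCompactSupport hsupp.mul_left

end DirichletMinimizer

section AverageGap

variable {d : ℕ} {V V₁ V₂ : Set (Euc d)} {f g : Euc d → ℝ}

/-- The difference of the averages of `f` over `V₁` and `V₂`: the linear part of the functional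
whose minimisers are studied. -/
def averageGap (V₁ V₂ : Set (Euc d)) (f : Euc d → ℝ) : ℝ := (⨍ x in V₁, f x) - ⨍ x in V₂, f x

/-- A nonempty bounded open set, over which a continuous function has a meaningful average. -/
structure IsAveragingDomain (V : Set (Euc d)) : Prop where
  isOpen : IsOpen V
  nonempty : V.Nonempty
  isBounded : Bornology.IsBounded V

lemma integrableOn_of_isBounded (hV : Bornology.IsBounded V) (hf : Continuous f) :
    IntegrableOn f V :=
  (hf.continuousOn.integrableOn_compact hV.isCompact_closure).mono_set subset_closure

lemma setAverage_add_smul (hV : Bornology.IsBounded V) (hf : Continuous f) (hg : Continuous g)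
    (t : ℝ) : ⨍ x in V, (f + t • g) x = (⨍ x in V, f x) + t * ⨍ x in V, g x := by
  have hint : ∫ x in V, (f + t • g) x = (∫ x in V, f x) + t * ∫ x in V, g x := by
    rw [integral_add' (integrableOn_of_isBounded hV hf)
      ((integrableOn_of_isBounded hV hg).smul t), Pi.smul_def, integral_smul, smul_eq_mul]
  simp only [setAverage_eq, smul_eq_mul, hint]
  ring

lemma averageGap_add_smul (hV₁ : Bornology.IsBounded V₁) (hV₂ : Bornology.IsBounded V₂)
    (hf : Continuous f) (hg : Continuous g) (t : ℝ) :
    averageGap V₁ V₂ (f + t • g) = averageGap V₁ V₂ f + t * averageGap V₁ V₂ g := by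
  rw [averageGap, setAverage_add_smul hV₁ hf hg, setAverage_add_smul hV₂ hf hg, averageGap,
    averageGap]
  ring

lemma abs_setAverage_mul_le (hV : MeasurableSet V) {c : ℝ} (hf : ∀ x ∈ V, |f x| ≤ c)
    (hc : 0 ≤ c) (hg : Integrable g) :
    |⨍ x in V, f x * g x| ≤ (volume.real V)⁻¹ * (c * ∫ x, |g x|) := by
  rw [setAverage_eq, smul_eq_mul, abs_mul, abs_of_nonneg (by positivity)]
  gcongr
  calc |∫ x in V, f x * g x| ≤ ∫ x in V, c * |g x| := by
        rw [← Real.norm_eq_abs]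
        refine norm_integral_le_of_norm_le (hg.abs.const_mul c).integrableOn ?_
        refine (ae_restrict_iff' hV).2 (Eventually.of_forall fun x hx => ?_)
        rw [norm_mul]
        exact mul_le_mul_of_nonneg_right (hf x hx) (norm_nonneg _)
    _ ≤ c * ∫ x, |g x| := by
        rw [integral_const_mul]
        exact mul_le_mul_of_nonneg_left
          (setIntegral_le_integral hg.abs (Eventually.of_forall fun x => abs_nonneg _)) hc

lemma IsAveragingDomain.abs_sub_setAverage_le (hV : IsAveragingDomain V) (hf : Continuous f)
    {c B : ℝ} (hB : ∀ x ∈ V, |c - f x| ≤ B) : |c - ⨍ x in V, f x| ≤ B := by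
  have hmem : ⨍ x in V, f x ∈ Metric.closedBall c B :=
    (convex_closedBall c B).set_average_mem Metric.isClosed_closedBall
      (hV.isOpen.measure_pos volume hV.nonempty).ne' hV.isBounded.measure_lt_top.ne
      ((ae_restrict_iff' hV.isOpen.measurableSet).2 (Eventually.of_forall fun x hx => by
        rw [Metric.mem_closedBall, dist_comm]; exact hB x hx))
      (integrableOn_of_isBounded hV.isBounded hf)
  rwa [Metric.mem_closedBall, dist_comm] at hmem

lemma averageGap_pos_of_tsupport_subset (hV₁ : IsOpen V₁) (hV₁b : Bornology.IsBounded V₁)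
    (hV : Disjoint V₁ V₂) (hf : Continuous f) (hfV : tsupport f ⊆ V₁) (hfc : HasCompactSupport f)
    (hf0 : ∀ x, 0 ≤ f x) {x : Euc d} (hx : f x ≠ 0) : 0 < averageGap V₁ V₂ f := by
  have hzero (y : Euc d) (hy : y ∉ V₁) : f y = 0 :=
    image_eq_zero_of_notMem_tsupport fun h => hy (hfV h)
  have hV₂ : ∫ y in V₂, f y = 0 :=
    setIntegral_eq_zero_of_forall_eq_zero fun y hy => hzero y (hV.notMem_of_mem_right hy)
  have hvol : 0 < volume.real V₁ :=
    ENNReal.toReal_pos (hV₁.measure_pos volume ⟨x, hfV (subset_tsupport f hx)⟩).ne'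
      hV₁b.measure_lt_top.ne
  have hint := hf.integral_pos_of_hasCompactSupport_nonneg_nonzero (μ := volume) hfc hf0 hx
  rw [averageGap, setAverage_eq, setAverage_eq, hV₂, smul_zero, sub_zero,
    setIntegral_eq_integral_of_forall_compl_eq_zero hzero]
  exact mul_pos (inv_pos.2 hvol) hint

end AverageGap

section Gibbs

open scoped Gradient RealInnerProductSpace ContDiff

variable {d : ℕ} {Φ φ ψ : Euc d → ℝ} {V₁ V₂ : Set (Euc d)} {b c ε M : ℝ}

lemma gradient_exp_div_mul {x : Euc d} (hΦ : DifferentiableAt ℝ Φ x) (hψ : DifferentiableAt ℝ ψ x) :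
    ∇ (fun y => exp (Φ y / ε) * ψ y) x = exp (Φ x / ε) • (∇ ψ x + (ψ x / ε) • ∇ Φ x) := by
  have hderiv : HasFDerivAt (fun y => exp (Φ y / ε)) _ x := (hΦ.hasFDerivAt.mul_const ε⁻¹).exp
  have hexp : ∇ (fun y => exp (Φ y / ε)) x = (exp (Φ x / ε) / ε) • ∇ Φ x := by
    refine ext_inner_right ℝ fun v => ?_
    rw [inner_gradient_left, hderiv.fderiv, real_inner_smul_left, inner_gradient_left]
    simp only [smul_apply, smul_eq_mul, div_eq_mul_inv]
    ring
  rw [gradient_mul hderiv.differentiableAt hψ, hexp, smul_add, smul_smul, smul_smul]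
  congr 2
  ring

lemma integral_mul_fokkerPlanck_eq_neg (hΦ : ContDiff ℝ ∞ Φ) (hφ : Differentiable ℝ φ)
    (hloc : LocallyIntegrable (∇ φ)) (hψ : ContDiff ℝ ∞ ψ) (hψc : HasCompactSupport ψ) :
    ∫ x, φ x * fokkerPlanck Φ ε ψ x
      = -∫ x, exp (-Φ x / ε) * ⟪∇ φ x, ∇ (fun y => exp (Φ y / ε) * ψ y) x⟫ := by
  have hψ' : ContDiff ℝ ∞ (∇ ψ) := contDiff_gradient hψ
  have hΦ' : ContDiff ℝ ∞ (∇ Φ) := contDiff_gradient hΦ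
  have hψε : HasCompactSupport fun x => ψ x / ε := hψc.comp_left (g := (· / ε)) (zero_div ε)
  have hflux : ContDiff ℝ ∞ fun x => ∇ ψ x + (ψ x / ε) • ∇ Φ x :=
    hψ'.add ((hψ.div_const ε).smul hΦ')
  simp only [fokkerPlanck]
  rw [integral_mul_diverg hφ hloc (hflux.of_le (by norm_cast))
    ((hasCompactSupport_gradient hψc).add hψε.smul_right)]
  refine congrArg Neg.neg (integral_congr_ae (Eventually.of_forall fun x => ?_))
  simp only
  rw [gradient_exp_div_mul (hΦ.differentiable (by simp) x) (hψ.differentiable (by simp) x),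
    real_inner_smul_right, ← mul_assoc, ← exp_add, neg_div, neg_add_cancel, exp_zero, one_mul]

lemma abs_averageGap_mul_le (hV₁ : MeasurableSet V₁) (hV₂ : MeasurableSet V₂) {f g : Euc d → ℝ}
    (hc : 0 ≤ c) (hf₁ : ∀ x ∈ V₁, |f x| ≤ c) (hf₂ : ∀ x ∈ V₂, |f x| ≤ c) (hg : Integrable g) :
    |averageGap V₁ V₂ fun x => f x * g x|
      ≤ ((volume.real V₁)⁻¹ + (volume.real V₂)⁻¹) * (c * ∫ x, |g x|) :=
  (abs_sub _ _).trans <| (add_le_add (abs_setAverage_mul_le hV₁ hf₁ hc hg)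
    (abs_setAverage_mul_le hV₂ hf₂ hc hg)).trans_eq (add_mul _ _ _).symm

namespace IsDirichletMinimizer

lemma integral_sq_norm_gradient (hV₁ : Bornology.IsBounded V₁) (hV₂ : Bornology.IsBounded V₂)
    {w : Euc d → ℝ} (hw : Measurable w) (hw0 : ∀ x, 0 ≤ w x)
    (h : IsDirichletMinimizer volume w (averageGap V₁ V₂) φ) :
    ∫ x, w x * ‖∇ φ x‖ ^ 2 = averageGap V₁ V₂ φ := by
  have hφ := h.differentiable
  simp only [← h.integral_mul_inner_gradient hw hw0 hφ h.integrable
    (averageGap_add_smul hV₁ hV₂ hφ.continuous hφ.continuous), real_inner_self_eq_norm_sq]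

lemma averageGap_nonneg (hV₁ : Bornology.IsBounded V₁) (hV₂ : Bornology.IsBounded V₂)
    {w : Euc d → ℝ} (hw : Measurable w) (hw0 : ∀ x, 0 ≤ w x)
    (h : IsDirichletMinimizer volume w (averageGap V₁ V₂) φ) : 0 ≤ averageGap V₁ V₂ φ := by
  rw [← h.integral_sq_norm_gradient hV₁ hV₂ hw hw0]
  exact integral_nonneg fun x => mul_nonneg (hw0 x) (sq_nonneg _)

lemma isAlmostStationary (hΦ : ContDiff ℝ ∞ Φ) (hε : 0 < ε) (hc : 0 < c)
    (hV₁ : MeasurableSet V₁) (hV₁b : Bornology.IsBounded V₁) (hΦ₁ : ∀ x ∈ V₁, Φ x ≤ b)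
    (hV₂ : MeasurableSet V₂) (hV₂b : Bornology.IsBounded V₂) (hΦ₂ : ∀ x ∈ V₂, Φ x ≤ b)
    (h : IsDirichletMinimizer volume (fun x => c * exp (-Φ x / ε)) (averageGap V₁ V₂) φ)
    (hM : ∀ x, |φ x| ≤ M) :
    IsAlmostStationary Φ ε (c⁻¹ * averageGap V₁ V₂ φ)
      (c⁻¹ * (((volume.real V₁)⁻¹ + (volume.real V₂)⁻¹) * exp (b / ε))) M φ := by
  have hw : Continuous fun x => c * exp (-Φ x / ε) := by have := hΦ.continuous; fun_prop
  have hw0 (x : Euc d) : 0 ≤ c * exp (-Φ x / ε) := by positivity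
  have hφ := h.differentiable
  have hloc : LocallyIntegrable (∇ φ) := locallyIntegrable_gradient
    (locallyIntegrable_sq_norm_gradient hw (fun x => by positivity) h.integrable)
  have henergy := h.integral_sq_norm_gradient hV₁b hV₂b hw.measurable hw0
  simp only [mul_assoc, integral_const_mul] at henergy
  refine ⟨hφ, hM, ?_, ?_, by positivity, fun ψ hψ hψc => ?_⟩
  · simpa only [← mul_assoc, inv_mul_cancel₀ hc.ne', one_mul] using h.integrable.const_mul c⁻¹
  · rw [← henergy, inv_mul_cancel_left₀ hc.ne']
  have htest : ContDiff ℝ ∞ fun x => exp (Φ x / ε) * ψ x := (hΦ.div_const ε).exp.mul hψ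
  have hfirst := h.integral_mul_inner_gradient hw.measurable hw0 (htest.differentiable (by simp))
    (integrable_mul_sq_norm_gradient hw (htest.of_le (by norm_cast)) hψc.mul_left)
    (averageGap_add_smul hV₁b hV₂b hφ.continuous htest.continuous)
  simp only [mul_assoc, integral_const_mul] at hfirst
  rw [integral_mul_fokkerPlanck_eq_neg hΦ hφ hloc hψ hψc, abs_neg,
    ← inv_mul_cancel_left₀ hc.ne' (∫ x, _), hfirst, abs_mul, abs_of_pos (inv_pos.2 hc), mul_assoc,
    mul_assoc]
  gcongr
  refine abs_averageGap_mul_le hV₁ hV₂ (exp_nonneg _) (fun x hx => ?_) (fun x hx => ?_)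
    (hψ.continuous.integrable_of_hasCompactSupport hψc)
  · rw [abs_exp]; gcongr; exact hΦ₁ x hx
  · rw [abs_exp]; gcongr; exact hΦ₂ x hx

end IsDirichletMinimizer

end Gibbs

section GibbsWeight

variable {d : ℕ} {Φ φ : Euc d → ℝ} {V₁ V₂ : Set (Euc d)} {a h H C ε M : ℝ}

lemma IsDirichletMinimizer.weight_ne_zero (hV₁ : IsAveragingDomain V₁)
    (hV₂b : Bornology.IsBounded V₂) (hV : Disjoint V₁ V₂)
    {w : Euc d → ℝ} (hmin : IsDirichletMinimizer volume w (averageGap V₁ V₂) φ) : w ≠ 0 := by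
  rintro rfl
  obtain ⟨x, hx⟩ := hV₁.nonempty
  obtain ⟨f, hfV, hfc, hf, hf01, hfx⟩ :=
    exists_contDiff_tsupport_subset (n := 1) (hV₁.isOpen.mem_nhds hx)
  have hgap : 0 < averageGap V₁ V₂ f :=
    averageGap_pos_of_tsupport_subset hV₁.isOpen hV₁.isBounded hV hf.continuous hfV hfc
      (fun y => (hf01 (mem_range_self y)).1) (hfx.trans_ne one_ne_zero)
  have hfirst := hmin.integral_mul_inner_gradient measurable_zero (fun _ => le_rfl)
    (hf.differentiable one_ne_zero) (by simp)
    (averageGap_add_smul hV₁.isBounded hV₂b hmin.differentiable.continuous hf.continuous)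
  simp only [Pi.zero_apply, zero_mul, integral_zero] at hfirst
  exact hgap.ne hfirst

lemma sigma_div (Φ : Euc d → ℝ) (ε τ : ℝ) :
    (fun x => sigma Φ ε x / τ) = fun x => (Zpart Φ ε * τ)⁻¹ * exp (-Φ x / ε) := by
  funext x
  rw [sigma, mul_inv]
  ring

lemma Zpart_le_add (hΦ : Continuous Φ) (hΦh : ∀ x, h ≤ Φ x) (hvol : volume {x | Φ x < a} < ⊤)
    (hε : 0 ≤ ε) : Zpart Φ ε
      ≤ volume.real {x | Φ x < a} * exp (-h / ε) + ∫ x in {x | a ≤ Φ x}, exp (-Φ x / ε) := by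
  by_cases hint : Integrable fun x => exp (-Φ x / ε)
  · have hmeas : MeasurableSet {x | a ≤ Φ x} :=
      (isClosed_le continuous_const hΦ).measurableSet
    have hcompl : {x | a ≤ Φ x}ᶜ = {x | Φ x < a} := by ext; simp
    rw [Zpart, ← integral_add_compl hmeas hint, hcompl, add_comm, mul_comm]
    gcongr
    refine (Real.le_norm_self _).trans (norm_setIntegral_le_of_norm_le_const hvol fun x _ => ?_)
    rw [Real.norm_of_nonneg (exp_nonneg _)]
    gcongr
    exact hΦh x
  · rw [Zpart, integral_undef hint]
    have htail : 0 ≤ ∫ x in {x | a ≤ Φ x}, exp (-Φ x / ε) := integral_nonneg fun x => exp_nonneg _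
    positivity

lemma exists_Zpart_le (hΦ : Continuous Φ) (hΦh : ∀ x, h ≤ Φ x)
    (hvol : ∀ a, volume {x | Φ x < a} < ⊤)
    (htight : ∀ a : ℝ, 0 ≤ a → ∃ C > 0, ∀ ε ∈ Ioo (0 : ℝ) 1,
      (∫ x in {x | a ≤ Φ x}, exp (-Φ x / ε)) ≤ C * exp (-a / ε)) :
    ∃ C : ℝ, 0 ≤ C ∧ ∀ ε ∈ Ioo (0 : ℝ) 1, Zpart Φ ε ≤ C * exp (-h / ε) := by
  obtain ⟨C, hC, htail⟩ := htight (max h 0) (le_max_right _ _)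
  refine ⟨volume.real {x | Φ x < max h 0} + C, by positivity, fun ε hε => ?_⟩
  have hε0 : 0 < ε := hε.1
  refine (Zpart_le_add hΦ hΦh (hvol (max h 0)) hε0.le).trans ?_
  rw [add_mul]
  refine add_le_add_right ((htail ε hε).trans ?_) _
  gcongr
  exact le_max_left _ _

lemma tau_pos (hε : 0 < ε) : 0 < tau H h ε := mul_pos (inv_pos.2 hε) (exp_pos _)

lemma Zpart_mul_tau_le (hε : 0 < ε) (hZ : Zpart Φ ε ≤ C * exp (-h / ε)) :
    Zpart Φ ε * tau H h ε ≤ C * (ε⁻¹ * exp (-H / ε)) := by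
  calc Zpart Φ ε * tau H h ε ≤ C * exp (-h / ε) * tau H h ε :=
        mul_le_mul_of_nonneg_right hZ (tau_pos hε).le
    _ = C * (ε⁻¹ * (exp (-h / ε) * exp (-(H - h) / ε))) := by rw [tau]; ring
    _ = C * (ε⁻¹ * exp (-H / ε)) := by rw [← exp_add]; ring_nf

lemma IsDirichletMinimizer.isMetastable (hΦ : ContDiff ℝ (⊤ : ℕ∞) Φ) (hε : 0 < ε)
    (hZ : Zpart Φ ε ≤ C * exp (-h / ε)) (hV₁ : IsAveragingDomain V₁)
    (hΦ₁ : ∀ x ∈ V₁, Φ x ≤ H) (hV₂ : IsAveragingDomain V₂) (hΦ₂ : ∀ x ∈ V₂, Φ x ≤ H)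
    (hV : Disjoint V₁ V₂)
    (hmin : IsDirichletMinimizer volume (fun x => sigma Φ ε x / tau H h ε) (averageGap V₁ V₂) φ)
    (hM : ∀ x, |φ x| ≤ M) :
    IsMetastable Φ H (C * (1 + ((volume.real V₁)⁻¹ + (volume.real V₂)⁻¹))) ε
      (averageGap V₁ V₂ φ) M φ := by
  set q := (volume.real V₁)⁻¹ + (volume.real V₂)⁻¹
  have hq : 0 ≤ q := by positivity
  have hZ0 : Zpart Φ ε ≠ 0 := fun h0 =>
    -- `Zpart` vanishes when the Gibbs weight is not integrable; then so does `sigma`.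
    hmin.weight_ne_zero hV₁ hV₂.isBounded hV (funext fun x => by simp [sigma, h0])
  have hZpos : 0 < Zpart Φ ε := (integral_nonneg fun _ => exp_nonneg _).lt_of_ne' hZ0
  have hτ : 0 < tau H h ε := tau_pos hε
  have hC : 0 ≤ C := (pos_of_mul_pos_left (hZpos.trans_le hZ) (exp_nonneg _)).le
  have hprod : Zpart Φ ε * tau H h ε ≤ C * (ε⁻¹ * exp (-H / ε)) := Zpart_mul_tau_le hε hZ
  rw [sigma_div] at hmin
  have hc : 0 < (Zpart Φ ε * tau H h ε)⁻¹ := by positivity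
  have hgap : 0 ≤ averageGap V₁ V₂ φ :=
    hmin.averageGap_nonneg hV₁.isBounded hV₂.isBounded
      (by have := hΦ.continuous; fun_prop) fun x => by positivity
  refine ⟨hgap, (hmin.isAlmostStationary hΦ hε hc hV₁.isOpen.measurableSet hV₁.isBounded hΦ₁
    hV₂.isOpen.measurableSet hV₂.isBounded hΦ₂ hM).mono ?_ ?_⟩
  · rw [inv_inv, ← mul_assoc]
    refine mul_le_mul_of_nonneg_right (hprod.trans ?_) hgap
    gcongr
    exact le_mul_of_one_le_right hC (by linarith)
  · rw [inv_inv]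
    calc Zpart Φ ε * tau H h ε * (q * exp (H / ε))
        ≤ C * (ε⁻¹ * exp (-H / ε)) * (q * exp (H / ε)) := by gcongr
      _ = C * q * ε⁻¹ * (exp (-H / ε) * exp (H / ε)) := by ring
      _ = C * q * ε⁻¹ := by rw [← exp_add]; simp [neg_div]
      _ ≤ C * (1 + q) * ε⁻¹ := by gcongr; linarith

end GibbsWeight

section Wells

lemma isBounded_sublevel_of_tendsto_cocompact {X : Type*} [PseudoMetricSpace X] [ProperSpace X]
    {f : X → ℝ} (hf : Tendsto f (cocompact X) atTop) (a : ℝ) :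
    Bornology.IsBounded {x | f x ≤ a} := by
  rw [Bornology.isBounded_def, Metric.cobounded_eq_cocompact]
  exact (hf.eventually_gt_atTop a).mono fun x hx => not_le.2 hx

lemma closure_connectedComponentIn_inter_subset {X : Type*} [TopologicalSpace X] {F : Set X}
    {x : X} : closure (connectedComponentIn F x) ∩ F ⊆ connectedComponentIn F x := by
  by_cases hx : x ∈ F
  · have hsub : connectedComponentIn F x ⊆ closure (connectedComponentIn F x) ∩ F :=
      subset_inter subset_closure (connectedComponentIn_subset F x)
    exact (isPreconnected_connectedComponentIn.subset_closure hsub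
      inter_subset_left).subset_connectedComponentIn (hsub (mem_connectedComponentIn hx))
      inter_subset_right
  · simp [connectedComponentIn_eq_empty hx]

variable {d : ℕ} {Φ : Euc d → ℝ} {H η : ℝ} {m : Euc d}

/-- The well of `Φ` below the level `H` around `m`, denoted `W_i` in the paper when `m = m_i`. -/
def well (Φ : Euc d → ℝ) (H : ℝ) (m : Euc d) : Set (Euc d) :=
  connectedComponentIn {ξ | Φ ξ < H} m

/-- The valley of depth more than `η` in the well around `m`, denoted `V_i` in the paper. -/
def valley (Φ : Euc d → ℝ) (H η : ℝ) (m : Euc d) : Set (Euc d) :=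
  {ξ | ξ ∈ well Φ H m ∧ Φ ξ < H - η}

lemma lt_of_mem_well {ξ : Euc d} (hξ : ξ ∈ well Φ H m) : Φ ξ < H :=
  connectedComponentIn_subset {ξ | Φ ξ < H} m hξ

lemma le_of_mem_closure_well (hΦ : Continuous Φ) {ξ : Euc d} (hξ : ξ ∈ closure (well Φ H m)) :
    Φ ξ ≤ H :=
  closure_minimal (fun _ hζ => (lt_of_mem_well hζ).le) (isClosed_le hΦ continuous_const) hξ

lemma isAveragingDomain_valley (hΦ : Continuous Φ) (hcoer : Tendsto Φ (cocompact (Euc d)) atTop)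
    (hη : 0 ≤ η) (hm : Φ m < H - η) : IsAveragingDomain (valley Φ H η m) where
  isOpen := (isOpen_lt hΦ continuous_const).connectedComponentIn.inter
    (isOpen_lt hΦ continuous_const)
  nonempty := ⟨m, mem_connectedComponentIn (hm.trans_le (sub_le_self H hη)), hm⟩
  isBounded := (isBounded_sublevel_of_tendsto_cocompact hcoer H).subset
    fun _ hξ => (lt_of_mem_well hξ.1).le

lemma closure_valley_subset_well (hΦ : Continuous Φ) (hη : 0 < η) :
    closure (valley Φ H η m) ⊆ well Φ H m := fun ξ hξ => by
  have hle : Φ ξ ≤ H - η :=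
    closure_minimal (fun _ hζ => hζ.2.le) (isClosed_le hΦ continuous_const) hξ
  exact closure_connectedComponentIn_inter_subset
    ⟨closure_mono (fun _ hζ => hζ.1) hξ, hle.trans_lt (sub_lt_self H hη)⟩

end Wells

section WellPair

open scoped ContDiff

variable {d : ℕ} {V₁ V₂ : Set (Euc d)} {f : Euc d → ℝ} {B : ℝ}

lemma averageGap_le (hV₁ : IsAveragingDomain V₁) (hV₂ : IsAveragingDomain V₂) (hf : Continuous f)
    (hB : ∀ x ∈ V₁, ∀ y ∈ V₂, |f x - f y| ≤ B) : averageGap V₁ V₂ f ≤ B := by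
  have hV₁_le : |(⨍ y in V₂, f y) - ⨍ x in V₁, f x| ≤ B :=
    hV₁.abs_sub_setAverage_le hf fun x hx => by
      rw [abs_sub_comm]
      exact hV₂.abs_sub_setAverage_le hf (hB x hx)
  rw [abs_sub_comm] at hV₁_le
  exact (le_abs_self _).trans hV₁_le

lemma sSup_abs_le_abs_setAverage_add {V : Set (Euc d)} (hV : IsAveragingDomain V)
    (hf : Continuous f) (hB : ∀ x ∈ V, ∀ y ∈ V, |f x - f y| ≤ B) :
    sSup ((fun x => |f x|) '' V) ≤ |⨍ x in V, f x| + B := by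
  refine csSup_le (hV.nonempty.image _) (forall_mem_image.2 fun x hx => ?_)
  have hdev := hV.abs_sub_setAverage_le hf (hB x hx)
  linarith [abs_sub_abs_le_abs_sub (f x) (⨍ x in V, f x)]

lemma max_sSup_abs_le_averageGap_add (hV₁ : IsAveragingDomain V₁) (hV₂ : IsAveragingDomain V₂)
    (hf : Continuous f) (hanti : ⨍ x in V₁, f x = -⨍ x in V₂, f x)
    (hgap : 0 ≤ averageGap V₁ V₂ f)
    (hB₁ : ∀ x ∈ V₁, ∀ y ∈ V₁, |f x - f y| ≤ B) (hB₂ : ∀ x ∈ V₂, ∀ y ∈ V₂, |f x - f y| ≤ B) :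
    max (sSup ((fun x => |f x|) '' V₁)) (sSup ((fun x => |f x|) '' V₂))
      ≤ averageGap V₁ V₂ f + B := by
  have hmean₁ : |⨍ x in V₁, f x| ≤ averageGap V₁ V₂ f := by
    rw [averageGap] at hgap ⊢
    rw [abs_of_nonneg] <;> linarith
  have hmean₂ : |⨍ x in V₂, f x| ≤ averageGap V₁ V₂ f := by rwa [← abs_neg, ← hanti]
  exact max_le ((sSup_abs_le_abs_setAverage_add hV₁ hf hB₁).trans (by gcongr))
    ((sSup_abs_le_abs_setAverage_add hV₂ hf hB₂).trans (by gcongr))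

theorem IsMetastable.exists_abs_sub_setAverage_le (hd : 1 ≤ d) {Φ : Euc d → ℝ}
    (hΦ : ContDiff ℝ ∞ Φ) {H A : ℝ} (hA : 0 ≤ A) {U : Set (Euc d)} (hU : IsPreconnected U)
    (hUH : ∀ x ∈ U, Φ x ≤ H) (hV₁ : IsAveragingDomain V₁) (hV₁U : closure V₁ ⊆ U)
    (hV₂ : IsAveragingDomain V₂) (hV₂U : closure V₂ ⊆ U)
    {φ : ℝ → Euc d → ℝ} (h : ∀ ε ∈ Ioo 0 1, IsMetastable Φ H A ε (averageGap V₁ V₂ (φ ε))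
      (max (sSup ((fun x => |φ ε x|) '' V₁)) (sSup ((fun x => |φ ε x|) '' V₂))) (φ ε))
    (hanti : ∀ ε ∈ Ioo (0 : ℝ) 1, ⨍ x in V₁, φ ε x = -⨍ x in V₂, φ ε x) {s V : Set (Euc d)}
    (hs : IsPreconnected s) (hsH : ∀ x ∈ s, Φ x < H) (hV : IsAveragingDomain V)
    (hVs : closure V ⊆ s) :
    ∃ B : ℝ, 0 ≤ B ∧ ∃ κ > 0, ∀ ε ∈ Ioo 0 1, ∀ x ∈ V,
      |φ ε x - ⨍ y in V, φ ε y| ≤ B * exp (-κ / ε) := by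
  have hcont (ε) (hε : ε ∈ Ioo (0 : ℝ) 1) : Continuous (φ ε) := (h ε hε).2.differentiable.continuous
  have hsub₁ : V₁ ⊆ closure V₁ ∪ closure V₂ := subset_closure.trans subset_union_left
  have hsub₂ : V₂ ⊆ closure V₁ ∪ closure V₂ := subset_closure.trans subset_union_right
  obtain ⟨B, hB, κ, hκ, hosc⟩ := IsMetastable.exists_oscillation_le_exp_neg_of_closed hd hΦ hA hU
    hUH (hV₁.isBounded.isCompact_closure.union hV₂.isBounded.isCompact_closure)
    (union_subset hV₁U hV₂U) h
    (fun ε hε B hB => averageGap_le hV₁ hV₂ (hcont ε hε)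
      fun x hx y hy => hB x (hsub₁ hx) y (hsub₂ hy))
    (fun ε hε B hB => max_sSup_abs_le_averageGap_add hV₁ hV₂ (hcont ε hε)
      (hanti ε hε) (h ε hε).1 (fun x hx y hy => hB x (hsub₁ hx) y (hsub₁ hy))
      fun x hx y hy => hB x (hsub₂ hx) y (hsub₂ hy)) hs hsH hV.isBounded.isCompact_closure hVs
  exact ⟨B, hB, κ, hκ, fun ε hε x hx => hV.abs_sub_setAverage_le (hcont ε hε)
    fun y hy => hosc ε hε x (subset_closure hx) y (subset_closure hy)⟩

end WellPair

lemma exists_forall_le_mul_exp_neg_of_finite {ι X : Type*} [Finite ι] {V : ι → Set X}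
    {g : ι → ℝ → X → ℝ} (h : ∀ i, ∃ B : ℝ, 0 ≤ B ∧ ∃ κ > 0, ∀ ε ∈ Ioo (0 : ℝ) 1, ∀ x ∈ V i,
      g i ε x ≤ B * exp (-κ / ε)) :
    ∃ B : ℝ, 0 ≤ B ∧ ∃ κ > 0, ∀ ε ∈ Ioo (0 : ℝ) 1, ∀ i, ∀ x ∈ V i,
      g i ε x ≤ B * exp (-κ / ε) := by
  choose B hB κ hκ hle using h
  obtain ⟨⟨b, hb⟩, hBb⟩ := Finite.exists_le fun i => (⟨B i, hB i⟩ : Ici (0 : ℝ))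
  obtain ⟨⟨k, hk⟩, hkκ⟩ := Finite.exists_ge fun i => (⟨κ i, hκ i⟩ : Ioi (0 : ℝ))
  refine ⟨b, hb, k, hk, fun ε hε i x hx => (hle i ε hε x hx).trans ?_⟩
  have hε0 : 0 < ε := hε.1
  gcongr
  · exact hBb i
  · exact hkκ i

theorem Linfty_estimate_on_valleys_general {d : ℕ} (hd : 1 ≤ d) {ι : Type*} [Finite ι]
    {Φ : Euc d → ℝ} (hΦ : ContDiff ℝ (⊤ : ℕ∞) Φ) (hcoer : Tendsto Φ (cocompact (Euc d)) atTop)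
    (htight : ∀ a : ℝ, 0 ≤ a → ∃ C > 0, ∀ ε ∈ Ioo (0 : ℝ) 1,
      (∫ ξ in {ξ | a ≤ Φ ξ}, exp (-Φ ξ / ε)) ≤ C * exp (-a / ε))
    {h H η : ℝ} (hΦh : ∀ ξ, h ≤ Φ ξ) (hη : 0 < η) {m : ι → Euc d} (hm : ∀ i, Φ (m i) < H - η)
    (hconn : IsPreconnected (⋃ i, closure (well Φ H (m i)))) {i₁ i₂ : ι}
    (hdisj : Disjoint (well Φ H (m i₁)) (well Φ H (m i₂))) {V : ι → Set (Euc d)}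
    (hV : ∀ i, V i = valley Φ H η (m i)) {φ : ℝ → Euc d → ℝ}
    (hmin : ∀ ε ∈ Ioo (0 : ℝ) 1, IsDirichletMinimizer volume (fun ξ => sigma Φ ε ξ / tau H h ε)
      (averageGap (V i₁) (V i₂)) (φ ε))
    (hanti : ∀ ε ∈ Ioo (0 : ℝ) 1, ⨍ ξ in V i₁, φ ε ξ = -⨍ ξ in V i₂, φ ε ξ)
    (hsup : ∀ ε ∈ Ioo (0 : ℝ) 1, ∀ ξ, |φ ε ξ| ≤
      max (sSup ((fun ζ => |φ ε ζ|) '' V i₁)) (sSup ((fun ζ => |φ ε ζ|) '' V i₂))) :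
    ∃ B : ℝ, 0 ≤ B ∧ ∃ κ > 0, ∀ ε ∈ Ioo (0 : ℝ) 1, ∀ i, ∀ ξ ∈ V i,
      |φ ε ξ - ⨍ ζ in V i, φ ε ζ| ≤ B * exp (-κ / ε) := by
  obtain rfl : V = fun i => valley Φ H η (m i) := funext hV
  have hΦc := hΦ.continuous
  have hdom (i) : IsAveragingDomain (valley Φ H η (m i)) :=
    isAveragingDomain_valley hΦc hcoer hη.le (hm i)
  have hle (i) : ∀ ξ ∈ valley Φ H η (m i), Φ ξ ≤ H := fun ξ hξ => (lt_of_mem_well hξ.1).le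
  have hcl (i) : closure (valley Φ H η (m i)) ⊆ well Φ H (m i) := closure_valley_subset_well hΦc hη
  have hclU (i) : closure (valley Φ H η (m i)) ⊆ ⋃ i, closure (well Φ H (m i)) :=
    (hcl i).trans (subset_closure.trans (subset_iUnion (fun i => closure (well Φ H (m i))) i))
  obtain ⟨C, hC, hZ⟩ := exists_Zpart_le hΦc hΦh (fun a =>
    ((isBounded_sublevel_of_tendsto_cocompact hcoer a).subset
      (fun ξ (hξ : Φ ξ < a) => hξ.le)).measure_lt_top) htight
  exact exists_forall_le_mul_exp_neg_of_finite fun i =>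
    IsMetastable.exists_abs_sub_setAverage_le hd hΦ (by positivity) hconn
      (fun ξ hξ => (mem_iUnion.1 hξ).elim fun i hi => le_of_mem_closure_well hΦc hi)
      (hdom i₁) (hclU i₁) (hdom i₂) (hclU i₂)
      (fun ε hε => (hmin ε hε).isMetastable hΦ hε.1 (hZ ε hε) (hdom i₁) (hle i₁) (hdom i₂) (hle i₂)
        (hdisj.mono (fun _ hξ => hξ.1) fun _ hξ => hξ.1) (hsup ε hε))
      hanti isPreconnected_connectedComponentIn (fun _ hξ => lt_of_mem_well hξ) (hdom i) (hcl i)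

lemma tendsto_const_mul_exp_neg_div (C : ℝ) {κ : ℝ} (hκ : 0 < κ) :
    Tendsto (fun ε : ℝ => C * exp (-κ / ε)) (𝓝[>] 0) (𝓝 0) := by
  have hexp : Tendsto (fun ε : ℝ => exp (-(κ * ε⁻¹))) (𝓝[>] 0) (𝓝 0) :=
    tendsto_exp_neg_atTop_nhds_zero.comp (tendsto_inv_nhdsGT_zero.const_mul_atTop hκ)
  simpa only [mul_zero, div_eq_mul_inv, neg_mul] using hexp.const_mul C

/-- **L∞ estimate on valleys:**
`‖φ^ε − λ_{ε,i}‖_{L^∞(V_i)} ≤ o_ε(1)(1 + λ_ε^{1−1/p})` for a fixed `p ∈ (d, ∞)`. -/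
theorem Linfty_estimate_on_valleys
    (d K : ℕ) (hd : 1 ≤ d) (hK : 2 ≤ K)
    (Φ : Euc d → ℝ) (hΦ : ContDiff ℝ (⊤ : ℕ∞) Φ)
    (hcoer : Tendsto Φ (cocompact (Euc d)) atTop)
    (hfin : {ξ : Euc d | fderiv ℝ Φ ξ = 0}.Finite)
    (htight : ∀ a : ℝ, 0 ≤ a → ∃ C > 0, ∀ ε ∈ Set.Ioo (0:ℝ) 1,
      (∫ ξ in {ξ : Euc d | a ≤ Φ ξ}, Real.exp (-Φ ξ / ε)) ≤ C * Real.exp (-a / ε))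
    (H h : ℝ) (hhH : h < H)
    (W : Fin K → Set (Euc d)) (m : Fin K → Euc d)
    (hWc : ∀ i, W i = connectedComponentIn {ξ : Euc d | Φ ξ < H} (m i))
    (hWcover : {ξ : Euc d | Φ ξ < H} = ⋃ i, W i)
    (hWdisj : Pairwise (Function.onFun Disjoint W))
    (hUconn : IsConnected (⋃ i, closure (W i)))
    (hmmem : ∀ i, m i ∈ W i) (hmval : ∀ i, Φ (m i) = h)
    (hmmin : ∀ i, ∀ ξ ∈ W i, h ≤ Φ ξ)
    (hmnd : ∀ i, 0 < (hessian Φ (m i)).det)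
    (S : Finset (Euc d))
    (hS : ∀ σ ∈ S, Φ σ = H ∧ fderiv ℝ Φ σ = 0)
    (hSfull : ∀ ξ : Euc d, fderiv ℝ Φ ξ = 0 → Φ ξ = H → ξ ∈ S)
    (lam : Euc d → ℝ)
    (hlam : ∀ σ ∈ S, 0 < lam σ ∧
      Module.End.HasEigenvalue (Matrix.toLin' (hessian Φ σ)) (-lam σ) ∧
      (∀ r : ℝ, Module.End.HasEigenvalue (Matrix.toLin' (hessian Φ σ)) r → r = -lam σ ∨ 0 < r) ∧
      Module.finrank ℝ (Module.End.eigenspace (Matrix.toLin' (hessian Φ σ)) (-lam σ)) = 1)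
    (hdetS : ∀ σ ∈ S, (hessian Φ σ).det < 0)
    (η : ℝ) (hηpos : 0 < η) (hηlt : η < H - h)
    (hnoc : ∀ ξ : Euc d, fderiv ℝ Φ ξ = 0 → Φ ξ ∉ Set.Ioo (H - η) H)
    (V : Fin K → Set (Euc d)) (hV : ∀ i, V i = {ξ | ξ ∈ W i ∧ Φ ξ < H - η})
    (i1 i2 : Fin K) (hi1 : (i1 : ℕ) = 0) (hi2 : (i2 : ℕ) = 1)
    (Ifun : ℝ → (Euc d → ℝ) → ℝ)
    (hIfun : ∀ ε : ℝ, ∀ ψ : Euc d → ℝ, Ifun ε ψ =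
      2⁻¹ * (∫ ξ : Euc d, (sigma Φ ε ξ / tau H h ε) * ‖gradient ψ ξ‖^2)
        - (volume (V i1)).toReal⁻¹ * (∫ ξ in V i1, ψ ξ)
        + (volume (V i2)).toReal⁻¹ * (∫ ξ in V i2, ψ ξ))
    (φ : ℝ → Euc d → ℝ)
    (hφreg : ∀ ε ∈ Set.Ioo (0:ℝ) 1, Differentiable ℝ (φ ε) ∧
      Integrable (fun ξ => (sigma Φ ε ξ / tau H h ε) * ‖gradient (φ ε) ξ‖^2))
    (hφmin : ∀ ε ∈ Set.Ioo (0:ℝ) 1, ∀ ψ : Euc d → ℝ, Differentiable ℝ ψ →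
      Integrable (fun ξ => (sigma Φ ε ξ / tau H h ε) * ‖gradient ψ ξ‖^2) →
      Ifun ε (φ ε) ≤ Ifun ε ψ)
    (lamE : ℝ → Fin K → ℝ)
    (hlamE : ∀ ε i, lamE ε i = (volume (V i)).toReal⁻¹ * ∫ ξ in V i, φ ε ξ)
    (hnorm : ∀ ε ∈ Set.Ioo (0:ℝ) 1, lamE ε i1 = -(lamE ε i2) ∧ 0 ≤ lamE ε i1)
    (hsupn : ∀ ε ∈ Set.Ioo (0:ℝ) 1, ∀ ξ : Euc d, |φ ε ξ| ≤
      max (sSup ((fun ζ => |φ ε ζ|) '' V i1)) (sSup ((fun ζ => |φ ε ζ|) '' V i2)))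
    (p : ℝ) (hp : (d : ℝ) < p) :
    ∃ err : ℝ → ℝ, Tendsto err (𝓝[>] (0:ℝ)) (𝓝 0) ∧
      ∀ ε ∈ Set.Ioo (0:ℝ) 1, ∀ i, ∀ ξ ∈ V i,
        |φ ε ξ - lamE ε i| ≤ err ε * (1 + lamE ε i1 ^ (1 - 1/p)) := by
  obtain rfl : W = fun i => well Φ H (m i) := funext hWc
  have hgap (ψ : Euc d → ℝ) (ε) : Ifun ε ψ
      = 2⁻¹ * (∫ ξ, sigma Φ ε ξ / tau H h ε * ‖gradient ψ ξ‖ ^ 2) - averageGap (V i1) (V i2) ψ := by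
    rw [hIfun, averageGap, setAverage_eq, setAverage_eq, sub_sub_eq_add_sub, sub_add_eq_add_sub]
    rfl
  have hmean (ε i) : lamE ε i = ⨍ ξ in V i, φ ε ξ := by rw [hlamE, setAverage_eq]; rfl
  have hmin (ε) (hε : ε ∈ Ioo (0 : ℝ) 1) : IsDirichletMinimizer volume
      (fun ξ => sigma Φ ε ξ / tau H h ε) (averageGap (V i1) (V i2)) (φ ε) :=
    ⟨(hφreg ε hε).1, (hφreg ε hε).2, by simpa only [hgap] using hφmin ε hε⟩
  have hΦh (ξ : Euc d) : h ≤ Φ ξ := (lt_or_ge (Φ ξ) H).elim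
    (fun hξ => (mem_iUnion.1 (hWcover.subset hξ)).elim fun i => hmmin i ξ) hhH.le.trans
  obtain ⟨B, hB, κ, hκ, hest⟩ := Linfty_estimate_on_valleys_general hd hΦ hcoer htight hΦh hηpos
    (fun i => by linarith [hmval i]) hUconn.isPreconnected
    (hWdisj (by rintro rfl; omega)) hV hmin
    (by simpa only [hmean] using fun ε hε => (hnorm ε hε).1) hsupn
  refine ⟨fun ε => B * exp (-κ / ε), tendsto_const_mul_exp_neg_div B hκ, fun ε hε i ξ hξ => ?_⟩
  rw [hmean]
  refine (hest ε hε i ξ hξ).trans (le_mul_of_one_le_right (by positivity) ?_)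
  exact le_add_of_nonneg_right (rpow_nonneg (hnorm ε hε).2 _)
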